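/- arXiv:1810.10849 — 3 statements merged into one kernel-verified Lean document; each statement's English description precedes it below -/
import Mathlib

section
/- Let B > 0 and L > 0. Let (λ_n)_{n∈ℤ^d} ⊂ ℝ^d satisfy Σ_{n∈ℤ^d} |h(λ_n)|² ≤ B for every h ∈ 𝒫₁ with ‖h‖ ≤ 1 (pointwise values via the continuous representative). Assume (μ_n)_{n∈ℤ^d} ⊂ ℝ^d satisfies |λ_n − μ_n| ≤ L for all n ∈ ℤ^d. Then for every f ∈ 𝒫₁, Σ_{n∈ℤ^d} |f(λ_n) − f(μ_n)|² ≤ B (e^{πdL} − 1)² ‖f‖². -/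
open MeasureTheory Filter Topology Metric ENNReal NNReal

noncomputable section

/-- `sinc` with value 1 at 0. -/
def sinc' (x : ℝ) : ℝ := if x = 0 then 1 else Real.sin x / x

/-- The function `f_{N,n}(x) = ∏_j sin (π (N x_j - n_j)) / (π (N x_j - n_j))`. -/
def fN (d : ℕ) (N : ℝ) (n : Fin d → ℤ) (x : EuclideanSpace ℝ (Fin d)) : ℝ :=
  ∏ j, sinc' (Real.pi * (N * x j - n j))

/-- The lattice point `n / N` in `ℝ^d`. -/
def latticePt (d : ℕ) (N : ℝ) (n : Fin d → ℤ) : EuclideanSpace ℝ (Fin d) :=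
  WithLp.toLp 2 fun j => (n j : ℝ) / N

/-- The heat solution at time `t > 0` with initial datum `u₀ ∈ L²(ℝ^d)`:
`u(t,x) = (4πt)^{-d/2} ∫ e^{-|x-y|²/(4t)} u₀(y) dy`. -/
def heatSol (d : ℕ) (u₀ : EuclideanSpace ℝ (Fin d) → ℝ) (t : ℝ)
    (x : EuclideanSpace ℝ (Fin d)) : ℝ :=
  (4 * Real.pi * t) ^ (-(d : ℝ) / 2) * ∫ y, Real.exp (-‖x - y‖ ^ 2 / (4 * t)) * u₀ y

/-- The family `F` is summable in `L²(ℝ^d)` with sum `g`: the finite partial sums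
converge to `g` in the `L²` norm along the filter of finite subsets of `ℤ^d`. -/
def HasSumL2 (d : ℕ) {V : Type} [NormedAddCommGroup V]
    (F : (Fin d → ℤ) → EuclideanSpace ℝ (Fin d) → V)
    (g : EuclideanSpace ℝ (Fin d) → V) : Prop :=
  Tendsto (fun s : Finset (Fin d → ℤ) =>
    eLpNorm (fun x => g x - ∑ n ∈ s, F n x) 2 volume) atTop (𝓝 0)

/-- The closed cube `Q_r(0)` in `ℝ^d`, centered at the origin, of side length `2r`. -/
def Qcube (d : ℕ) (r : ℝ) : Set (EuclideanSpace ℝ (Fin d)) := {ξ | ∀ j, |ξ j| ≤ r}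

/-- The truncated Fourier integral, with the paper's normalization
`(2π)^{-d/2} ∫_{|x| ≤ R} e^{-i x·ξ} f(x) dx`. -/
def truncFT (d : ℕ) (f : EuclideanSpace ℝ (Fin d) → ℂ) (R : ℝ)
    (ξ : EuclideanSpace ℝ (Fin d)) : ℂ :=
  (((2 * Real.pi) ^ (-(d : ℝ) / 2) : ℝ) : ℂ) *
    ∫ x in closedBall (0 : EuclideanSpace ℝ (Fin d)) R,
      Complex.exp (-(Complex.I * ((inner ℝ x ξ : ℝ) : ℂ))) * f x

/-- `fhat` is the Fourier transform of `f ∈ L²(ℝ^d)` in the `L²` (Plancherel) sense: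
`fhat ∈ L²` and the Fourier integrals of the truncations of `f` converge to `fhat`
in the `L²` norm. -/
def IsL2Fourier (d : ℕ) (f fhat : EuclideanSpace ℝ (Fin d) → ℂ) : Prop :=
  MemLp fhat 2 volume ∧
    Tendsto (fun R : ℝ => eLpNorm (fun ξ => fhat ξ - truncFT d f R ξ) 2 volume)
      atTop (𝓝 0)

/-- The `L²(ℝ^d)` norm of a function, as a real number. -/
def l2norm (d : ℕ) {V : Type} [NormedAddCommGroup V]
    (f : EuclideanSpace ℝ (Fin d) → V) : ℝ :=
  (eLpNorm f 2 volume).toReal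

open FourierTransform SchwartzMap

section
variable {V : Type*} [NormedAddCommGroup V] [InnerProductSpace ℝ V] [FiniteDimensional ℝ V] [MeasurableSpace V] [BorelSpace V]

theorem fourier_cont (h : V → ℂ) (hi : Integrable h) : Continuous (𝓕 h) := 
  VectorFourier.fourierIntegral_continuous Real.continuous_fourierChar
    (by exact continuous_inner) hi

theorem fourierInv_cont (h : V → ℂ) (hi : Integrable h) : Continuous (𝓕⁻ h) := by
  have : 𝓕⁻ h = fun x => 𝓕 h (-x) := by
    ext x; exact Real.fourierInv_eq_fourier_neg h x
  rw [this]
  exact (fourier_cont h hi).comp continuous_neg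

theorem fourier_L2_ae (h : V → ℂ) (hi : Integrable h) (hm : MemLp h 2 volume) :
    ((𝓕 (hm.toLp h) : Lp ℂ 2 (volume : Measure V)) : V → ℂ) =ᵐ[volume] 𝓕 h := by
  apply ae_eq_of_integral_contDiff_smul_eq
  · exact (Lp.memLp _).locallyIntegrable (by norm_num)
  · exact (fourier_cont h hi).locallyIntegrable
  · intro g g_smooth g_cpt
    have hg₁ : HasCompactSupport (Complex.ofRealCLM ∘ g) := g_cpt.comp_left rfl
    have hg₂ : ContDiff ℝ ((⊤:ℕ∞):WithTop ℕ∞) (Complex.ofRealCLM ∘ g) := by fun_prop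
    set φ := hg₁.toSchwartzMap hg₂ with hφ
    have h1 : Lp.toTemperedDistribution (𝓕 (hm.toLp h)) φ = ∫ x, (𝓕 φ) x • h x := by
      rw [← Lp.fourier_toTemperedDistribution_eq, TemperedDistribution.fourier_apply, 
        Lp.toTemperedDistribution_apply]
      apply integral_congr_ae
      filter_upwards [hm.coeFn_toLp] with x hx
      rw [hx]
    rw [Lp.toTemperedDistribution_apply] at h1
    have h2 : ∫ x, (𝓕 φ) x • h x = ∫ x, φ x • 𝓕 h x := by
      have := VectorFourier.integral_fourierIntegral_smul_eq_flip (μ := volume) (ν := volume) (L := innerₗ V) (e := Real.fourierChar) (f := φ) (g := h) Real.continuous_fourierChar (by exact continuous_inner) (φ.integrable) hi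
      rw [flip_innerₗ] at this
      exact this
    rw [h2] at h1
    exact h1

theorem fourierInv_L2_ae (h : V → ℂ) (hi : Integrable h) (hm : MemLp h 2 volume) :
    ((𝓕⁻ (hm.toLp h) : Lp ℂ 2 (volume : Measure V)) : V → ℂ) =ᵐ[volume] 𝓕⁻ h := by
  apply ae_eq_of_integral_contDiff_smul_eq
  · exact (Lp.memLp _).locallyIntegrable (by norm_num)
  · exact (fourierInv_cont h hi).locallyIntegrable
  · intro g g_smooth g_cpt
    have hg₁ : HasCompactSupport (Complex.ofRealCLM ∘ g) := g_cpt.comp_left rfl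
    have hg₂ : ContDiff ℝ ((⊤:ℕ∞):WithTop ℕ∞) (Complex.ofRealCLM ∘ g) := by fun_prop
    set φ := hg₁.toSchwartzMap hg₂ with hφ
    have h1 : Lp.toTemperedDistribution (𝓕⁻ (hm.toLp h)) φ = ∫ x, (𝓕⁻ φ) x • h x := by
      rw [← Lp.fourierInv_toTemperedDistribution_eq, TemperedDistribution.fourierInv_apply, 
        Lp.toTemperedDistribution_apply]
      apply integral_congr_ae
      filter_upwards [hm.coeFn_toLp] with x hx
      rw [hx]
    rw [Lp.toTemperedDistribution_apply] at h1
    have h2 : ∫ x, (𝓕⁻ φ) x • h x = ∫ x, φ x • 𝓕⁻ h x := by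
      have := VectorFourier.integral_fourierIntegral_smul_eq_flip (μ := volume) (ν := volume) (L := -innerₗ V) (e := Real.fourierChar) (f := φ) (g := h) Real.continuous_fourierChar (by exact continuous_inner.neg) (φ.integrable) hi
      have e : (-innerₗ V).flip = - innerₗ V := by
        ext x y; simp [real_inner_comm]
      rw [e] at this
      rw [SchwartzMap.fourierInv_coe]
      exact this
    rw [h2] at h1
    exact h1
theorem eLp_trunc (f : V → ℂ) (hm : MemLp f 2 volume) :
    Tendsto (fun R : ℝ => eLpNorm (fun x => Set.indicator (closedBall 0 R) f x - f x) 2 volume) atTop (𝓝 0) := by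
  have e : ∀ R : ℝ, eLpNorm (fun x => Set.indicator (closedBall 0 R) f x - f x) 2 volume
     = (∫⁻ x, Set.indicator (closedBall 0 R)ᶜ (fun x => ‖f x‖ₑ ^ (2:ℝ)) x) ^ (1/2 : ℝ) := by
    intro R
    rw [eLpNorm_eq_lintegral_rpow_enorm_toReal (by norm_num) (by norm_num)]
    simp only [ENNReal.toReal_ofNat]
    congr 2
    ext x
    by_cases hx : x ∈ closedBall (0:V) R
    · rw [Set.indicator_of_mem hx, Set.indicator_of_notMem (by simpa using hx)]; simp
    · rw [Set.indicator_of_notMem hx, Set.indicator_of_mem (by simpa using hx)]; simp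
  simp only [e]
  have fin : ∫⁻ x, ‖f x‖ₑ ^ (2:ℝ) ≠ ∞ := by
    have := (eLpNorm_lt_top_iff_lintegral_rpow_enorm_lt_top (by norm_num) (by norm_num)).1 hm.2
    simpa using this.ne
  have key : Tendsto (fun R : ℝ => ∫⁻ x, Set.indicator (closedBall 0 R)ᶜ (fun x => ‖f x‖ₑ ^ (2:ℝ)) x) atTop (𝓝 (∫⁻ x : V, 0)) := by
    apply tendsto_lintegral_filter_of_dominated_convergence' (fun x => ‖f x‖ₑ ^ (2:ℝ))
    · refine Eventually.of_forall fun R => ?_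
      refine AEMeasurable.indicator ?_ measurableSet_closedBall.compl
      exact hm.1.enorm.pow_const _
    · refine Eventually.of_forall fun R => Eventually.of_forall fun x => ?_
      exact Set.indicator_le_self' (by simp) _
    · exact fin
    · refine Eventually.of_forall fun x => ?_
      apply tendsto_const_nhds.congr'
      filter_upwards [eventually_ge_atTop ‖x‖] with R hR
      rw [Set.indicator_of_notMem (by simpa using hR)]
  simp only [lintegral_zero] at key
  have := (ENNReal.continuous_rpow_const (y := 1/2)).tendsto 0 |>.comp key
  simpa [Function.comp_def] using this

theorem trunc_fourier (f : V → ℂ) (hm : MemLp f 2 volume) :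
    Tendsto (fun R : ℝ => eLpNorm (fun x => (𝓕 (hm.toLp f) : Lp ℂ 2 (volume : Measure V)) x - 𝓕 (Set.indicator (closedBall 0 R) f) x) 2 volume) atTop (𝓝 0) := by
  refine (eLp_trunc f hm).congr fun R => ?_
  have hmR : MemLp (Set.indicator (closedBall 0 R) f) 2 volume := hm.indicator measurableSet_closedBall
  have hiR : Integrable (Set.indicator (closedBall 0 R) f) := by
    rw [integrable_indicator_iff measurableSet_closedBall]
    exact (hm.locallyIntegrable (by norm_num)).integrableOn_isCompact (isCompact_closedBall 0 R)
  have h1 : eLpNorm (fun x => (𝓕 (hm.toLp f) : Lp ℂ 2 (volume : Measure V)) x - 𝓕 (Set.indicator (closedBall 0 R) f) x) 2 volume = ‖𝓕 (hm.toLp f) - 𝓕 (hmR.toLp _)‖ₑ := by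
    rw [Lp.enorm_def]
    apply eLpNorm_congr_ae
    filter_upwards [fourier_L2_ae _ hiR hmR, Lp.coeFn_sub (𝓕 (hm.toLp f)) (𝓕 (hmR.toLp _))] with x h1 h2
    rw [h2, Pi.sub_apply, h1]
  have h2 : ‖𝓕 (hm.toLp f) - 𝓕 (hmR.toLp _)‖ₑ = ‖hmR.toLp _ - hm.toLp f‖ₑ := by
    change ‖Lp.fourierTransformₗᵢ V ℂ _ - Lp.fourierTransformₗᵢ V ℂ _‖ₑ = _
    rw [← map_sub, ← ofReal_norm, ← ofReal_norm, LinearIsometryEquiv.norm_map, norm_sub_rev]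
  rw [h1, h2, ← MemLp.toLp_sub, Lp.enorm_toLp]
  rfl
end

section
variable {d : ℕ}

theorem truncFT_eq (f : EuclideanSpace ℝ (Fin d) → ℂ) (R : ℝ) (ξ : EuclideanSpace ℝ (Fin d)) :
    truncFT d f R ξ = (((2 * Real.pi) ^ (-(d : ℝ) / 2) : ℝ) : ℂ) *
      𝓕 (Set.indicator (closedBall 0 R) f) ((2 * Real.pi)⁻¹ • ξ) := by
  unfold truncFT
  congr 1
  rw [Real.fourier_eq', ← integral_indicator measurableSet_closedBall]
  congr 1
  ext x
  by_cases hx : x ∈ closedBall (0 : EuclideanSpace ℝ (Fin d)) R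
  · rw [Set.indicator_of_mem hx, Set.indicator_of_mem hx, smul_eq_mul, inner_smul_right]
    congr 2
    have : -2 * Real.pi * ((2 * Real.pi)⁻¹ * inner ℝ x ξ) = - inner ℝ x ξ := by
      field_simp
    rw [this]; push_cast; ring
  · rw [Set.indicator_of_notMem hx, Set.indicator_of_notMem hx, smul_zero]

theorem eLp_scale (F : EuclideanSpace ℝ (Fin d) → ℂ) :
    eLpNorm (fun ξ => (((2 * Real.pi) ^ (-(d : ℝ) / 2) : ℝ) : ℂ) * F ((2 * Real.pi)⁻¹ • ξ)) 2 volume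
      = eLpNorm F 2 volume := by
  have hp : (0:ℝ) < 2 * Real.pi := by positivity
  have hp' : (2 * Real.pi)⁻¹ ≠ 0 := by positivity
  have h1 := eLpNorm_const_smul (((2 * Real.pi) ^ (-(d : ℝ) / 2) : ℝ) : ℂ) (fun ξ => F ((2 * Real.pi)⁻¹ • ξ)) 2 (volume : Measure (EuclideanSpace ℝ (Fin d)))
  have h2 : eLpNorm (fun ξ => F ((2 * Real.pi)⁻¹ • ξ)) 2 (volume : Measure (EuclideanSpace ℝ (Fin d))) = 
     eLpNorm F 2 (Measure.map ((2 * Real.pi)⁻¹ • ·) (volume : Measure (EuclideanSpace ℝ (Fin d)))) := by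
    rw [MeasurableEmbedding.eLpNorm_map_measure]
    · rfl
    · exact (Homeomorph.smulOfNeZero _ hp').measurableEmbedding
  rw [Measure.map_addHaar_smul _ hp', eLpNorm_smul_measure_of_ne_top (by norm_num)] at h2
  have h0 : (fun ξ => (((2 * Real.pi) ^ (-(d : ℝ) / 2) : ℝ) : ℂ) * F ((2 * Real.pi)⁻¹ • ξ)) =
      (((2 * Real.pi) ^ (-(d : ℝ) / 2) : ℝ) : ℂ) • (fun ξ => F ((2 * Real.pi)⁻¹ • ξ)) := by
    ext ξ; rw [Pi.smul_apply, smul_eq_mul]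
  rw [h0, h1, h2, smul_eq_mul, ← mul_assoc]
  have : ‖(((2 * Real.pi) ^ (-(d : ℝ) / 2) : ℝ) : ℂ)‖ₑ * ENNReal.ofReal |((2 * Real.pi)⁻¹ ^ Module.finrank ℝ (EuclideanSpace ℝ (Fin d)))⁻¹| ^ (1 / 2 : ℝ≥0∞).toReal = 1 := by
    rw [finrank_euclideanSpace_fin, ← ofReal_norm, Complex.norm_real, Real.norm_of_nonneg (by positivity),
      abs_of_pos (by positivity), ENNReal.ofReal_rpow_of_pos (by positivity), ← ENNReal.ofReal_mul (by positivity)]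
    rw [inv_pow, inv_inv, ← Real.rpow_natCast, ← Real.rpow_mul hp.le, ← Real.rpow_add hp]
    have : -(d:ℝ)/2 + d * (1 / 2 : ℝ≥0∞).toReal = 0 := by
      simp; ring
    rw [this]; simp
  rw [this, one_mul]

theorem isL2_iff (f G : EuclideanSpace ℝ (Fin d) → ℂ)
    (hm : MemLp f 2 volume) (hG : G =ᵐ[volume] (𝓕 (hm.toLp f) : Lp ℂ 2 (volume : Measure (EuclideanSpace ℝ (Fin d))))) :
    IsL2Fourier d f (fun ξ => (((2 * Real.pi) ^ (-(d : ℝ) / 2) : ℝ) : ℂ) * G ((2 * Real.pi)⁻¹ • ξ)) := by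
  have hp' : (2 * Real.pi)⁻¹ ≠ 0 := by positivity
  have hGm : MemLp G 2 volume := (memLp_congr_ae hG).2 (Lp.memLp _)
  constructor
  · constructor
    · exact (hGm.1.comp_quasiMeasurePreserving (Measure.quasiMeasurePreserving_smul _ hp')).const_mul _
    · rw [eLp_scale]; exact hGm.2
  · refine (trunc_fourier f hm).congr fun R => ?_
    rw [← eLp_scale]
    apply eLpNorm_congr_ae
    filter_upwards [(Measure.quasiMeasurePreserving_smul volume hp').ae_eq_comp hG] with x hx
    simp only [Function.comp] at hx
    rw [truncFT_eq, hx]; ring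

def Hcube (d : ℕ) : Set (EuclideanSpace ℝ (Fin d)) := {η | ∀ j, |η j| ≤ 1/2}

theorem Hcube_closed : IsClosed (Hcube d) := by
  unfold Hcube
  simp only [Set.ofPred_forall]
  refine isClosed_iInter fun j => isClosed_le (by fun_prop) continuous_const

theorem Hcube_compact : IsCompact (Hcube d) := by
  apply Metric.isCompact_of_isClosed_isBounded Hcube_closed
  refine (isBounded_iff_forall_norm_le).2 ⟨√(∑ j : Fin d, (1/2:ℝ)^2), fun x hx => ?_⟩
  rw [EuclideanSpace.norm_eq]
  gcongr with j
  exact hx j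

theorem int_of_supp (G : EuclideanSpace ℝ (Fin d) → ℂ) (hm : MemLp G 2 volume)
    (hs : ∀ η ∉ Hcube d, G η = 0) : Integrable G := by
  have : Set.indicator (Hcube d) G = G := by
    ext x
    by_cases hx : x ∈ Hcube d
    · rw [Set.indicator_of_mem hx]
    · rw [Set.indicator_of_notMem hx, hs x hx]
  rw [← this, integrable_indicator_iff Hcube_closed.measurableSet]
  exact (hm.locallyIntegrable (by norm_num)).integrableOn_isCompact Hcube_compact

theorem rep_prop (G : EuclideanSpace ℝ (Fin d) → ℂ) (hi : Integrable G) (hm : MemLp G 2 volume) :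
    MemLp (𝓕⁻ G) 2 volume ∧ IsL2Fourier d (𝓕⁻ G) (fun ξ => (((2 * Real.pi) ^ (-(d : ℝ) / 2) : ℝ) : ℂ) * G ((2 * Real.pi)⁻¹ • ξ))
     ∧ eLpNorm (𝓕⁻ G) 2 volume = eLpNorm G 2 volume := by
  have h1 := fourierInv_L2_ae G hi hm
  have h2 : MemLp (𝓕⁻ G) 2 volume := (memLp_congr_ae h1).1 (Lp.memLp _)
  have h3 : h2.toLp (𝓕⁻ G) = 𝓕⁻ (hm.toLp G) := by
    rw [← Lp.toLp_coeFn (𝓕⁻ (hm.toLp G)) (Lp.memLp _)]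
    exact (MemLp.toLp_eq_toLp_iff _ _).2 h1.symm
  refine ⟨h2, isL2_iff _ _ h2 ?_, ?_⟩
  · rw [h3, FourierTransform.fourier_fourierInv_eq]
    exact hm.coeFn_toLp.symm
  · rw [← Lp.enorm_toLp h2, ← Lp.enorm_toLp hm, h3]
    change ‖(Lp.fourierTransformₗᵢ _ ℂ).symm _‖ₑ = _
    rw [← ofReal_norm, ← ofReal_norm, LinearIsometryEquiv.norm_map]

theorem rep_exists (f fhat : EuclideanSpace ℝ (Fin d) → ℂ)
    (hf : Continuous f) (hfm : MemLp f 2 volume) (hFT : IsL2Fourier d f fhat)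
    (hsupp : ∀ᵐ ξ ∂(volume : Measure (EuclideanSpace ℝ (Fin d))),
      ξ ∉ Qcube d Real.pi → fhat ξ = 0) : 
    ∃ G : EuclideanSpace ℝ (Fin d) → ℂ, (∀ η ∉ Hcube d, G η = 0) ∧ MemLp G 2 volume ∧ f = 𝓕⁻ G := by
  have hp : (2 * Real.pi) ≠ 0 := by positivity
  set Gf : EuclideanSpace ℝ (Fin d) → ℂ := ⇑(𝓕 (hfm.toLp f) : Lp ℂ 2 (volume : Measure (EuclideanSpace ℝ (Fin d)))) with hGf
  have hGfm : MemLp Gf 2 volume := Lp.memLp _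
  obtain ⟨k1, k2⟩ := isL2_iff f Gf hfm (ae_eq_refl _)
  set gh := (fun ξ => (((2 * Real.pi) ^ (-(d : ℝ) / 2) : ℝ) : ℂ) * Gf ((2 * Real.pi)⁻¹ • ξ)) with hgh
  have htm : ∀ R, AEStronglyMeasurable (truncFT d f R) (volume : Measure (EuclideanSpace ℝ (Fin d))) := by
    intro R
    have hiR : Integrable (Set.indicator (closedBall 0 R) f) := by
      rw [integrable_indicator_iff measurableSet_closedBall]
      exact (hfm.locallyIntegrable (by norm_num)).integrableOn_isCompact (isCompact_closedBall 0 R)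
    have e := funext (truncFT_eq f R)
    rw [e]
    have := fourier_cont _ hiR
    exact Continuous.aestronglyMeasurable (by fun_prop)
  have h0 : eLpNorm (fhat - gh) 2 volume = 0 := by
    have ht := hFT.2.add k2
    rw [add_zero] at ht
    refine le_antisymm (ge_of_tendsto' ht fun R => ?_) bot_le
    have : fhat - gh = (fun ξ => fhat ξ - truncFT d f R ξ) - (fun ξ => gh ξ - truncFT d f R ξ) := by
      ext x; simp
    rw [this]
    exact eLpNorm_sub_le (hFT.1.1.sub (htm R)) (k1.1.sub (htm R)) (by norm_num)
  have h1 : fhat =ᵐ[volume] gh := by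
    rw [eLpNorm_eq_zero_iff (hFT.1.1.sub k1.1) (by norm_num)] at h0
    filter_upwards [h0] with x hx
    exact sub_eq_zero.1 hx
  have h2 : ∀ᵐ ξ ∂(volume : Measure (EuclideanSpace ℝ (Fin d))), ξ ∉ Qcube d Real.pi → gh ξ = 0 := by
    filter_upwards [h1, hsupp] with x hx hx2 hx3
    rw [← hx, hx2 hx3]
  have h3 : ∀ᵐ ξ ∂(volume : Measure (EuclideanSpace ℝ (Fin d))), ξ ∉ Hcube d → Gf ξ = 0 := by
    filter_upwards [(Measure.quasiMeasurePreserving_smul volume hp).ae h2] with x hx hx2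
    have : (2 * Real.pi) • x ∉ Qcube d Real.pi := by
      contrapose! hx2
      intro j
      have := hx2 j
      simp only [PiLp.smul_apply, smul_eq_mul, abs_mul, abs_of_pos Real.pi_pos] at this
      have hpi := Real.pi_pos
      rw [abs_of_pos (by norm_num : (0:ℝ) < 2)] at this
      nlinarith
    have h := hx this
    simp only [hgh, smul_smul, inv_mul_cancel₀ hp, one_smul, mul_eq_zero] at h
    rcases h with h | h
    · exfalso
      have : (0:ℝ) < (2 * Real.pi) ^ (-(d : ℝ) / 2) := by positivity
      exact this.ne' (by exact_mod_cast h)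
    · exact h
  set G := Set.indicator (Hcube d) Gf with hG
  have h4 : G =ᵐ[volume] Gf := by
    filter_upwards [h3] with x hx
    by_cases hx2 : x ∈ Hcube d
    · rw [hG, Set.indicator_of_mem hx2]
    · rw [hG, Set.indicator_of_notMem hx2, hx hx2]
  have hGm : MemLp G 2 volume := (memLp_congr_ae h4).2 hGfm
  have hGs : ∀ η ∉ Hcube d, G η = 0 := fun η h => Set.indicator_of_notMem h _
  have hGi := int_of_supp G hGm hGs
  refine ⟨G, hGs, hGm, ?_⟩
  have h5 : hGm.toLp G = 𝓕 (hfm.toLp f) := by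
    rw [← Lp.toLp_coeFn (𝓕 (hfm.toLp f)) (Lp.memLp _)]
    exact (MemLp.toLp_eq_toLp_iff _ _).2 h4
  have h6 := fourierInv_L2_ae G hGi hGm
  rw [h5, FourierTransform.fourierInv_fourier_eq] at h6
  exact (Continuous.ae_eq_iff_eq volume hf (fourierInv_cont G hGi)).1 (hfm.coeFn_toLp.symm.trans h6)

theorem sum_bound (B : ℝ)
    (lam : (Fin d → ℤ) → EuclideanSpace ℝ (Fin d))
    (hlam : ∀ h hhat : EuclideanSpace ℝ (Fin d) → ℂ,
      Continuous h → MemLp h 2 volume → IsL2Fourier d h hhat →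
      (∀ᵐ ξ ∂(volume : Measure (EuclideanSpace ℝ (Fin d))),
        ξ ∉ Qcube d Real.pi → hhat ξ = 0) →
      l2norm d h ≤ 1 →
      ∑' n : Fin d → ℤ, (‖h (lam n)‖₊ : ℝ≥0∞) ^ 2 ≤ ENNReal.ofReal B)
    (G : EuclideanSpace ℝ (Fin d) → ℂ) (hs : ∀ η ∉ Hcube d, G η = 0) (hm : MemLp G 2 volume) :
    ∑' n : Fin d → ℤ, ‖𝓕⁻ G (lam n)‖ₑ ^ 2 ≤ ENNReal.ofReal B * eLpNorm G 2 volume ^ 2 := by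
  by_cases hN : eLpNorm G 2 volume = 0
  · have : G =ᵐ[volume] 0 := (eLpNorm_eq_zero_iff hm.1 (by norm_num)).1 hN
    have h2 : ∀ x, 𝓕⁻ G x = 0 := by
      intro x
      rw [Real.fourierInv_congr_ae this, Real.fourierInv_eq']
      simp
    simp [h2]
  · set N := eLpNorm G 2 volume with hNd
    have hNt : N ≠ ⊤ := hm.2.ne
    set a : ℂ := ((N.toReal⁻¹ : ℝ) : ℂ) with ha
    have hae : ‖a‖ₑ = N⁻¹ := by
      have : 0 < N.toReal := ENNReal.toReal_pos hN hNt
      rw [← ofReal_norm, ha, Complex.norm_real, Real.norm_of_nonneg (by positivity), ENNReal.ofReal_inv_of_pos this, ENNReal.ofReal_toReal hNt]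
    have hm' : MemLp (a • G) 2 volume := hm.const_smul a
    have hs' : ∀ η ∉ Hcube d, (a • G) η = 0 := fun η h => by simp [hs η h]
    have hi' := int_of_supp _ hm' hs'
    obtain ⟨r1, r2, r3⟩ := rep_prop _ hi' hm'
    have h1 := hlam _ _ (fourierInv_cont _ hi') r1 r2 ?_ ?_
    · have e : ∀ x, 𝓕⁻ (a • G) x = a * 𝓕⁻ G x := by
        intro x
        rw [Real.fourierInv_eq', Real.fourierInv_eq', ← integral_const_mul]
        congr 1; ext v; simp; ring
      have e2 : ∀ n, (‖𝓕⁻ (a • G) (lam n)‖₊ : ℝ≥0∞) ^ 2 = (N⁻¹)^2 * ‖𝓕⁻ G (lam n)‖ₑ ^ 2 := by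
        intro n
        rw [e, ← hae, ← mul_pow, ← enorm_mul]; rfl
      simp only [e2, ENNReal.tsum_mul_left] at h1
      calc _ = N^2 * ((N⁻¹)^2 * ∑' n, ‖𝓕⁻ G (lam n)‖ₑ ^ 2) := by
            rw [← mul_assoc, ← mul_pow, ENNReal.mul_inv_cancel hN hNt, one_pow, one_mul]
        _ ≤ N^2 * ENNReal.ofReal B := by gcongr
        _ = _ := mul_comm _ _
    · refine Eventually.of_forall fun ξ hξ => ?_
      rw [hs', mul_zero]
      contrapose! hξ
      intro j
      have := hξ j
      have hpi := Real.pi_pos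
      simp only [PiLp.smul_apply, smul_eq_mul, abs_mul, abs_inv, abs_of_pos Real.pi_pos] at this
      rw [abs_of_pos (by norm_num : (0:ℝ) < 2), inv_mul_le_iff₀ (by positivity)] at this
      linarith
    · unfold l2norm
      rw [r3, eLpNorm_const_smul, hae, ENNReal.inv_mul_cancel hN hNt]
      simp
end

section
variable {d : ℕ}

theorem enn_cs {ι : Type*} (c y : ι → ℝ≥0∞) :
    (∑' j, c j * y j) ^ 2 ≤ (∑' j, c j) * ∑' j, c j * y j ^ 2 := by
  have amgm : ∀ a b : ℝ≥0∞, a * b ≤ 2⁻¹ * (a ^ 2 + b ^ 2) := by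
    intro a b
    rcases eq_or_ne a ⊤ with rfl | ha
    · simp [ENNReal.mul_top]
    rcases eq_or_ne b ⊤ with rfl | hb
    · simp [ENNReal.mul_top]
    lift a to ℝ≥0 using ha
    lift b to ℝ≥0 using hb
    have : a * b ≤ 2⁻¹ * (a ^ 2 + b ^ 2) := by
      have := two_mul_le_add_sq (a:ℝ) b
      rw [← NNReal.coe_le_coe]; push_cast; linarith
    have h2 : ((2⁻¹ : ℝ≥0) : ℝ≥0∞) = 2⁻¹ := by rw [ENNReal.coe_inv (by norm_num)]; rfl
    rw [← h2]
    exact_mod_cast this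
  have e1 : (∑' j, c j * y j) ^ 2 = ∑' j, ∑' k, c j * c k * (y j * y k) := by
    rw [sq, ← ENNReal.tsum_mul_right]
    congr 1; ext j
    rw [← ENNReal.tsum_mul_left]
    congr 1; ext k; ring
  have e2 : ∑' j, ∑' k, c j * c k * y j ^ 2 = (∑' j, c j) * ∑' j, c j * y j ^ 2 := by
    rw [mul_comm, ← ENNReal.tsum_mul_right]
    congr 1; ext j
    rw [← ENNReal.tsum_mul_left]
    congr 1; ext k; ring
  have e3 : ∑' j, ∑' k, c j * c k * y k ^ 2 = (∑' j, c j) * ∑' j, c j * y j ^ 2 := by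
    rw [← ENNReal.tsum_mul_right]
    congr 1; ext j
    rw [← ENNReal.tsum_mul_left]
    congr 1; ext k; ring
  rw [e1]
  calc _ ≤ ∑' j, ∑' k, c j * c k * (2⁻¹ * (y j ^ 2 + y k ^ 2)) := by
        exact ENNReal.tsum_le_tsum fun j => ENNReal.tsum_le_tsum fun k => mul_le_mul_right (amgm _ _) _
    _ = ∑' j, ∑' k, 2⁻¹ * (c j * c k * y j ^ 2 + c j * c k * y k ^ 2) := by
        congr 1; ext j; congr 1; ext k; ring
    _ = 2⁻¹ * (∑' j, ∑' k, c j * c k * y j ^ 2 + ∑' j, ∑' k, c j * c k * y k ^ 2) := by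
        simp only [ENNReal.tsum_mul_left, ENNReal.tsum_add]
    _ = _ := by
        rw [e2, e3, ← two_mul, ← mul_assoc, ENNReal.inv_mul_cancel (by norm_num) (by norm_num), one_mul]

def Gw {k : ℕ} (G : EuclideanSpace ℝ (Fin d) → ℂ) (w : Fin k → Fin d) : EuclideanSpace ℝ (Fin d) → ℂ :=
  fun η => (∏ i, (2 * Complex.I * ((η (w i) : ℝ) : ℂ))) * G η

theorem Gw_le {k : ℕ} (G : EuclideanSpace ℝ (Fin d) → ℂ) (hs : ∀ η ∉ Hcube d, G η = 0) (w : Fin k → Fin d)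
    (η : EuclideanSpace ℝ (Fin d)) : ‖Gw G w η‖ ≤ ‖G η‖ := by
  by_cases h : η ∈ Hcube d
  · unfold Gw
    rw [norm_mul]
    apply mul_le_of_le_one_left (norm_nonneg _)
    rw [norm_prod]
    apply Finset.prod_le_one
    · intros; positivity
    · intro i _
      have := h (w i)
      simp only [norm_mul, Complex.norm_I, Complex.norm_real, Real.norm_eq_abs, Complex.norm_ofNat]
      linarith
  · unfold Gw; simp [hs η h]

theorem Gw_memLp {k : ℕ} (G : EuclideanSpace ℝ (Fin d) → ℂ) (hs : ∀ η ∉ Hcube d, G η = 0) 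
    (hm : MemLp G 2 volume) (w : Fin k → Fin d) : MemLp (Gw G w) 2 volume := by
  refine hm.mono ?_ (Eventually.of_forall (Gw_le G hs w))
  unfold Gw
  refine AEStronglyMeasurable.mul ?_ hm.1
  exact Continuous.aestronglyMeasurable (by fun_prop)

theorem diff_bound (G : EuclideanSpace ℝ (Fin d) → ℂ) (hs : ∀ η ∉ Hcube d, G η = 0) 
    (hm : MemLp G 2 volume) (x y : EuclideanSpace ℝ (Fin d)) (L : ℝ) (hL : 0 < L) (hxy : ‖x - y‖ ≤ L) :
    ‖𝓕⁻ G x - 𝓕⁻ G y‖ₑ ≤ ∑' j : (Σ k : ℕ, (Fin (k+1) → Fin d)),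
      ENNReal.ofReal ((Real.pi * L) ^ (j.1 + 1) / (j.1 + 1).factorial) * ‖𝓕⁻ (Gw G j.2) x‖ₑ := by
  set t := y - x with ht
  have htj : ∀ j, |t j| ≤ L := fun j => by
    have h1 := PiLp.norm_apply_le t j
    rw [ht, norm_sub_rev, ← ht] at h1
    exact h1.trans hxy
  have hGi := int_of_supp G hm hs
  have hi : ∀ {k : ℕ} (w : Fin k → Fin d), Integrable (Gw G w) := fun w =>
    int_of_supp _ (Gw_memLp G hs hm w) (fun η h => by simp [Gw, hs η h])
  set z : EuclideanSpace ℝ (Fin d) → ℂ := fun η => ((2 * Real.pi * inner ℝ η t : ℝ) : ℂ) * Complex.I with hz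
  set ex : EuclideanSpace ℝ (Fin d) → ℂ := fun η => Complex.exp (((2 * Real.pi * inner ℝ η x : ℝ) : ℂ) * Complex.I) with hex
  have hexn : ∀ η, ‖ex η‖ = 1 := fun η => Complex.norm_exp_ofReal_mul_I _
  have hexc : Continuous ex := by simp only [hex]; fun_prop
  have hzc : Continuous z := by simp only [hz]; fun_prop
  set F : ℕ → EuclideanSpace ℝ (Fin d) → ℂ := fun k η => ex η * (z η ^ (k+1) / ((k+1).factorial : ℂ)) * G η with hF
  have hzb : ∀ η ∈ Hcube d, ‖z η‖ ≤ Real.pi * d * L := by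
    intro η hη
    simp only [hz, norm_mul, Complex.norm_I, mul_one, Complex.norm_real, Real.norm_eq_abs, abs_of_pos Real.pi_pos]
    have h1 : |(inner ℝ η t : ℝ)| ≤ ∑ j : Fin d, L * (1/2) := by
      rw [PiLp.inner_apply]
      refine (Finset.abs_sum_le_sum_abs _ _).trans (Finset.sum_le_sum fun j _ => ?_)
      simp only [RCLike.inner_apply, conj_trivial, abs_mul]
      exact mul_le_mul (htj j) (hη j) (abs_nonneg _) hL.le
    rw [Finset.sum_const, Finset.card_univ, Fintype.card_fin, nsmul_eq_mul] at h1
    have hpi := Real.pi_pos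
    calc |(2:ℝ)| * Real.pi * |(inner ℝ η t : ℝ)| ≤ |(2:ℝ)| * Real.pi * (d * (L * (1/2))) := by gcongr
      _ = _ := by rw [abs_of_pos (by norm_num : (0:ℝ) < 2)]; ring
  have hsum1 : Summable (fun k : ℕ => (Real.pi * d * L) ^ (k+1) / ((k+1).factorial : ℝ)) :=
    (_root_.summable_nat_add_iff (f := fun k : ℕ => (Real.pi * d * L) ^ k / (k.factorial : ℝ)) 1).2 (Real.summable_pow_div_factorial (Real.pi * d * L))
  have hasS : HasSum (fun k => ∫ η, F k η) (∫ η, ex η * (Complex.exp (z η) - 1) * G η) := by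
    apply hasSum_integral_of_dominated_convergence (fun k η => (Real.pi * d * L) ^ (k+1) / ((k+1).factorial : ℝ) * ‖G η‖)
    · intro k
      refine AEStronglyMeasurable.mul ?_ hm.1
      exact Continuous.aestronglyMeasurable (by fun_prop)
    · intro k
      refine Eventually.of_forall fun η => ?_
      by_cases h : η ∈ Hcube d
      · simp only [hF, norm_mul, hexn, one_mul, norm_div, norm_pow, Complex.norm_natCast]
        gcongr
        exact hzb η h
      · simp [hF, hs η h]
    · exact Eventually.of_forall fun η => hsum1.mul_right _
    · simp only [_root_.tsum_mul_right]
      exact hGi.norm.const_mul _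
    · refine Eventually.of_forall fun η => ?_
      simp only [hF]
      refine HasSum.mul_right _ (HasSum.mul_left _ ?_)
      have h1 := NormedSpace.expSeries_div_hasSum_exp (z η)
      rw [← Complex.exp_eq_exp_ℂ] at h1
      have h2 := (hasSum_nat_add_iff' 1).2 h1
      simpa using h2
  have hdiff : 𝓕⁻ G y - 𝓕⁻ G x = ∫ η, ex η * (Complex.exp (z η) - 1) * G η := by
    rw [Real.fourierInv_eq', Real.fourierInv_eq', ← integral_sub]
    · congr 1; ext η
      have : inner ℝ η y = inner ℝ η x + inner ℝ η t := by
        rw [← inner_add_right, ht]; simp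
      simp only [hex, hz, this, smul_eq_mul]
      rw [mul_sub, ← Complex.exp_add]
      push_cast
      ring_nf
    all_goals
      refine hGi.bdd_mul (c := 1) (Continuous.aestronglyMeasurable (by fun_prop)) (Eventually.of_forall fun η => ?_)
      exact (Complex.norm_exp_ofReal_mul_I _).le
  have hFk : ∀ k, ∫ η, F k η = ∑ w : Fin (k+1) → Fin d, (((∏ i, (Real.pi * t (w i))) / (k+1).factorial : ℝ) : ℂ) * 𝓕⁻ (Gw G w) x := by
    intro k
    simp only [Real.fourierInv_eq', ← integral_const_mul]
    rw [← integral_finsetSum]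
    · congr 1; ext η
      have hz2 : z η = ∑ j : Fin d, ((Real.pi * t j : ℝ) : ℂ) * (2 * Complex.I * ((η j : ℝ) : ℂ)) := by
        simp only [hz]
        rw [PiLp.inner_apply]
        simp only [RCLike.inner_apply, conj_trivial]
        push_cast
        rw [Finset.mul_sum, Finset.sum_mul]
        refine Finset.sum_congr rfl fun j _ => ?_
        ring
      have hz3 : z η ^ (k+1) = ∑ w : Fin (k+1) → Fin d, ∏ i, (((Real.pi * t (w i) : ℝ) : ℂ) * (2 * Complex.I * ((η (w i) : ℝ) : ℂ))) := by
        rw [hz2, Fintype.sum_pow]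
      simp only [hF, hz3]
      rw [Finset.sum_div, Finset.mul_sum, Finset.sum_mul]
      refine Finset.sum_congr rfl fun w _ => ?_
      rw [Finset.prod_mul_distrib]
      simp only [Gw, smul_eq_mul, hex]
      push_cast
      ring
    · intro w _
      refine Integrable.const_mul ?_ _
      refine (hi w).bdd_mul (c := 1) (Continuous.aestronglyMeasurable (by fun_prop)) (Eventually.of_forall fun η => ?_)
      exact (Complex.norm_exp_ofReal_mul_I _).le
  rw [← enorm_neg, neg_sub, hdiff, ← hasS.tsum_eq, ENNReal.tsum_sigma']
  refine (enorm_tsum_le_tsum_enorm).trans ?_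
  refine ENNReal.tsum_le_tsum fun k => ?_
  rw [tsum_fintype, hFk]
  refine (enorm_sum_le _ _).trans (Finset.sum_le_sum fun w _ => ?_)
  rw [enorm_mul]
  gcongr
  rw [← ofReal_norm, Complex.norm_real, norm_div, norm_prod, Real.norm_natCast]
  gcongr
  calc ∏ i, ‖Real.pi * t (w i)‖ ≤ ∏ i : Fin (k+1), (Real.pi * L) := by
        apply Finset.prod_le_prod
        · intros; positivity
        · intro i _
          rw [norm_mul, Real.norm_of_nonneg Real.pi_pos.le]
          have := Real.pi_pos
          gcongr
          exact htj _
    _ = _ := by simp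

theorem coef_sum (L : ℝ) (hL : 0 < L) : ∑' j : (Σ k : ℕ, (Fin (k+1) → Fin d)),
      ENNReal.ofReal ((Real.pi * L) ^ (j.1 + 1) / (j.1 + 1).factorial) = ENNReal.ofReal (Real.exp (Real.pi * d * L) - 1) := by
  have hpi := Real.pi_pos
  rw [ENNReal.tsum_sigma']
  have h1 : ∀ k : ℕ, ∑' _w : Fin (k+1) → Fin d, ENNReal.ofReal ((Real.pi * L) ^ (k + 1) / (k + 1).factorial) =
      ENNReal.ofReal ((Real.pi * d * L) ^ (k + 1) / (k + 1).factorial) := by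
    intro k
    rw [tsum_fintype, Finset.sum_const, Finset.card_univ, Fintype.card_fun, Fintype.card_fin, Fintype.card_fin,
      nsmul_eq_mul, ← ENNReal.ofReal_natCast, ← ENNReal.ofReal_mul (by positivity)]
    congr 1
    push_cast
    rw [mul_pow, mul_pow, mul_pow]; ring
  simp only [h1]
  have h2 : HasSum (fun k : ℕ => (Real.pi * d * L) ^ (k+1) / ((k+1).factorial : ℝ)) (Real.exp (Real.pi * d * L) - 1) := by
    have h1 := NormedSpace.expSeries_div_hasSum_exp (Real.pi * d * L)
    rw [← Real.exp_eq_exp_ℝ] at h1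
    simpa using (hasSum_nat_add_iff' 1).2 h1
  rw [← ENNReal.ofReal_tsum_of_nonneg (fun k => by positivity) h2.summable, h2.tsum_eq]
end

/-- Stability of sampling for `𝒫₁`: let `B, L > 0`, let `(λ_n)` satisfy
`Σ_n |h(λ_n)|² ≤ B` for every `h ∈ 𝒫₁` with `‖h‖ ≤ 1`, and let `(μ_n)` satisfy
`|λ_n - μ_n| ≤ L`. Then every `f ∈ 𝒫₁` satisfies
`Σ_n |f(λ_n) - f(μ_n)|² ≤ B (e^{πdL} - 1)² ‖f‖²`. Membership in `𝒫₁` is expressed via a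
continuous representative together with an `L²` Fourier transform supported in `Q_π(0)`. -/
theorem statement10 (d : ℕ) (hd : 0 < d) (B L : ℝ) (hB : 0 < B) (hL : 0 < L)
    (lam mu : (Fin d → ℤ) → EuclideanSpace ℝ (Fin d))
    (hlam : ∀ h hhat : EuclideanSpace ℝ (Fin d) → ℂ,
      Continuous h → MemLp h 2 volume → IsL2Fourier d h hhat →
      (∀ᵐ ξ ∂(volume : Measure (EuclideanSpace ℝ (Fin d))),
        ξ ∉ Qcube d Real.pi → hhat ξ = 0) →
      l2norm d h ≤ 1 →
      ∑' n : Fin d → ℤ, (‖h (lam n)‖₊ : ℝ≥0∞) ^ 2 ≤ ENNReal.ofReal B)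
    (hmu : ∀ n, ‖lam n - mu n‖ ≤ L)
    (f fhat : EuclideanSpace ℝ (Fin d) → ℂ)
    (hf : Continuous f) (hfm : MemLp f 2 volume) (hFT : IsL2Fourier d f fhat)
    (hsupp : ∀ᵐ ξ ∂(volume : Measure (EuclideanSpace ℝ (Fin d))),
      ξ ∉ Qcube d Real.pi → fhat ξ = 0) :
    ∑' n : Fin d → ℤ, (‖f (lam n) - f (mu n)‖₊ : ℝ≥0∞) ^ 2
      ≤ ENNReal.ofReal
          (B * (Real.exp (Real.pi * d * L) - 1) ^ 2 * l2norm d f ^ 2) := by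
  obtain ⟨G, hs, hm, rfl⟩ := rep_exists f fhat hf hfm hFT hsupp
  have hN := (rep_prop G (int_of_supp G hm hs) hm).2.2
  set E := Real.exp (Real.pi * d * L) - 1 with hE
  have hE0 : 0 ≤ E := by
    have hpi := Real.pi_pos
    rw [hE, sub_nonneg]; exact Real.one_le_exp (by positivity)
  set N := eLpNorm G 2 volume with hNd
  have hl : l2norm d (𝓕⁻ G) = N.toReal := by unfold l2norm; rw [hN]
  set c : (Σ k : ℕ, (Fin (k+1) → Fin d)) → ℝ≥0∞ := fun j =>
    ENNReal.ofReal ((Real.pi * L) ^ (j.1 + 1) / (j.1 + 1).factorial) with hc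
  have hcs : ∑' j, c j = ENNReal.ofReal E := coef_sum L hL
  calc ∑' n : Fin d → ℤ, (‖𝓕⁻ G (lam n) - 𝓕⁻ G (mu n)‖₊ : ℝ≥0∞) ^ 2
      ≤ ∑' n, (∑' j, c j) * ∑' j, c j * ‖𝓕⁻ (Gw G j.2) (lam n)‖ₑ ^ 2 := by
        refine ENNReal.tsum_le_tsum fun n => ?_
        refine le_trans ?_ (enn_cs _ _)
        exact pow_le_pow_left' (diff_bound G hs hm (lam n) (mu n) L hL (hmu n)) 2
    _ = (∑' j, c j) * ∑' j, c j * ∑' n, ‖𝓕⁻ (Gw G j.2) (lam n)‖ₑ ^ 2 := by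
        rw [ENNReal.tsum_mul_left, ENNReal.tsum_comm]
        simp only [ENNReal.tsum_mul_left]
    _ ≤ (∑' j, c j) * ∑' j, c j * (ENNReal.ofReal B * N ^ 2) := by
        gcongr with j
        refine (sum_bound B lam hlam (Gw G j.2) (fun η h => by simp [Gw, hs η h]) (Gw_memLp G hs hm j.2)).trans ?_
        gcongr
        exact eLpNorm_mono (Gw_le G hs j.2)
    _ = ENNReal.ofReal (B * E ^ 2 * l2norm d (𝓕⁻ G) ^ 2) := by
        rw [ENNReal.tsum_mul_right, hcs, hl, ENNReal.ofReal_mul (by positivity), ENNReal.ofReal_mul hB.le,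
          ENNReal.ofReal_pow hE0, ENNReal.ofReal_pow ENNReal.toReal_nonneg, ENNReal.ofReal_toReal hm.2.ne]
        ring
end
end

section
/- Let N > 0 and ε ∈ (0,1). Assume (λ_n)_{n∈ℤ^d} ⊂ ℝ^d satisfies |λ_n − n/N| ≤ ε/N for all n ∈ ℤ^d. Then for every f ∈ 𝒫_N (pointwise values via the continuous representative), (Σ_{n∈ℤ^d} |f(λ_n) − f(n/N)|²)^{1/2} ≤ ε π d e^{πd} N^{d/2} ‖f‖. -/
open MeasureTheory Filter Topology Metric ENNReal NNReal

noncomputable section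

open FourierTransform SchwartzMap in
theorem ae_eq_of_schwartz {d : ℕ} (u v : EuclideanSpace ℝ (Fin d) → ℂ)
    (hu : LocallyIntegrable u volume) (hv : LocallyIntegrable v volume)
    (h : ∀ φ : 𝓢(EuclideanSpace ℝ (Fin d), ℂ), ∫ x, φ x * u x = ∫ x, φ x * v x) :
    u =ᵐ[volume] v := by
  have : ∀ᵐ x, (u - v) x = 0 := by
    apply ae_eq_zero_of_integral_contDiff_smul_eq_zero (hu.sub hv)
    intro g hg hc
    have hg₁ : HasCompactSupport (Complex.ofRealCLM ∘ g) := hc.comp_left rfl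
    have hg₂ : ContDiff ℝ (⊤ : ℕ∞) (Complex.ofRealCLM ∘ g) := by fun_prop
    have h1 := h (hg₁.toSchwartzMap hg₂)
    have i1 := hu.integrable_smul_left_of_hasCompactSupport hg.continuous hc
    have i2 := hv.integrable_smul_left_of_hasCompactSupport hg.continuous hc
    simp only [Pi.sub_apply, smul_sub]
    rw [integral_sub i1 i2, sub_eq_zero]
    simpa using h1
  filter_upwards [this] with x hx
  simpa [sub_eq_zero] using hx

open FourierTransform SchwartzMap in
theorem integral_fourier_swap {d : ℕ} (u : EuclideanSpace ℝ (Fin d) → ℂ)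
    (hu : Integrable u volume) (φ : 𝓢(EuclideanSpace ℝ (Fin d), ℂ)) :
    ∫ x, φ x * 𝓕 u x = ∫ x, (𝓕 φ) x * u x := by
  have := VectorFourier.integral_fourierIntegral_smul_eq_flip (μ := volume) (ν := volume)
    (L := innerₗ (EuclideanSpace ℝ (Fin d))) (f := u) (g := φ)
    Real.continuous_fourierChar (by simpa using continuous_inner) hu φ.integrable
  simp only [smul_eq_mul] at this
  simp_rw [mul_comm (φ _), mul_comm _ (u _)]
  rw [SchwartzMap.fourier_coe]
  rw [flip_innerₗ] at this
  exact this

open FourierTransform SchwartzMap in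
/-- the pairing identity -/
theorem pairing {d : ℕ} (f G : EuclideanSpace ℝ (Fin d) → ℂ)
    (hf : MemLp f 2 volume) (hG : MemLp G 2 volume)
    (hlim : Tendsto (fun R : ℝ => eLpNorm (fun ξ => G ξ -
      𝓕 ((closedBall (0 : EuclideanSpace ℝ (Fin d)) R).indicator f) ξ) 2 volume) atTop (𝓝 0))
    (φ : 𝓢(EuclideanSpace ℝ (Fin d), ℂ)) :
    ∫ x, φ x * G x = ∫ x, (𝓕 φ) x * f x := by
  have hint : ∀ R : ℝ, Integrable ((closedBall (0 : EuclideanSpace ℝ (Fin d)) R).indicator f) := by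
    intro R
    rw [integrable_indicator_iff measurableSet_closedBall]
    exact (hf.locallyIntegrable (by norm_num)).integrableOn_isCompact (isCompact_closedBall _ _)
  have hFG : Integrable (fun x => (𝓕 φ) x * f x) :=
    ((𝓕 φ).memLp 2 volume).integrable_mul hf
  -- right limit
  have hr : Tendsto (fun R : ℝ => ∫ x, (𝓕 φ) x *
      (closedBall (0 : EuclideanSpace ℝ (Fin d)) R).indicator f x) atTop
      (𝓝 (∫ x, (𝓕 φ) x * f x)) := by
    apply tendsto_integral_filter_of_dominated_convergence (fun x => ‖(𝓕 φ) x * f x‖)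
    · exact Eventually.of_forall fun R =>
        (𝓕 φ).continuous.aestronglyMeasurable.mul (hint R).1
    · refine Eventually.of_forall fun R => Eventually.of_forall fun x => ?_
      rw [norm_mul, norm_mul]
      gcongr
      exact norm_indicator_le_norm_self _ _
    · exact hFG.norm
    · refine Eventually.of_forall fun x => ?_
      apply tendsto_const_nhds.congr'
      filter_upwards [eventually_ge_atTop ‖x‖] with R hR
      rw [Set.indicator_of_mem (by simpa using hR)]
  have hl : Tendsto (fun R : ℝ => ∫ x, φ x *
      𝓕 ((closedBall (0 : EuclideanSpace ℝ (Fin d)) R).indicator f) x) atTop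
      (𝓝 (∫ x, φ x * G x)) := by
    rw [tendsto_iff_edist_tendsto_0]
    have hφ := φ.memLp 2 volume
    have hfin : Tendsto (fun R : ℝ => eLpNorm φ 2 volume * eLpNorm (fun ξ => G ξ -
      𝓕 ((closedBall (0 : EuclideanSpace ℝ (Fin d)) R).indicator f) ξ) 2 volume) atTop
      (𝓝 0) := by
      have := ENNReal.Tendsto.const_mul (a := eLpNorm φ 2 volume) hlim (Or.inr hφ.2.ne)
      simpa using this
    refine tendsto_of_tendsto_of_tendsto_of_le_of_le' tendsto_const_nhds hfin
      (Eventually.of_forall fun _ => zero_le) ?_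
    filter_upwards [hlim.eventually_lt_const (zero_lt_one)] with R hR
    set D := fun ξ => G ξ - 𝓕 ((closedBall (0 : EuclideanSpace ℝ (Fin d)) R).indicator f) ξ with hD
    have hcont : Continuous (𝓕 ((closedBall (0 : EuclideanSpace ℝ (Fin d)) R).indicator f)) :=
      VectorFourier.fourierIntegral_continuous Real.continuous_fourierChar
        (by simpa using continuous_inner) (hint R)
    have hDm : MemLp D 2 volume :=
      ⟨hG.1.sub hcont.aestronglyMeasurable, hR.trans ENNReal.one_lt_top⟩
    have e1 : ∫ x, φ x * G x - φ x *
      𝓕 ((closedBall (0 : EuclideanSpace ℝ (Fin d)) R).indicator f) x = ∫ x, φ x * D x := by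
      simp [hD, mul_sub]
    have i1 : Integrable (fun x => φ x * G x) := hφ.integrable_mul hG
    have i2 : Integrable (fun x => φ x *
        𝓕 ((closedBall (0 : EuclideanSpace ℝ (Fin d)) R).indicator f) x) := by
      have := i1.sub (hφ.integrable_mul hDm)
      refine this.congr (Eventually.of_forall fun x => ?_)
      simp [hD]; ring
    rw [edist_comm, edist_eq_enorm_sub, ← integral_sub i1 i2, e1]
    calc _ ≤ ∫⁻ x, ‖φ x * D x‖ₑ := enorm_integral_le_lintegral_enorm _
      _ = eLpNorm (fun x => φ x * D x) 1 volume := by rw [eLpNorm_one_eq_lintegral_enorm]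
      _ ≤ _ := by
        have := eLpNorm_smul_le_mul_eLpNorm (p := 2) (q := 2) (r := 1) hDm.1 hφ.1
        exact this
  refine tendsto_nhds_unique hl ?_
  refine hr.congr fun R => ?_
  exact (integral_fourier_swap _ (hint R) φ).symm

open FourierTransform SchwartzMap in
theorem norm_eq_and_inv {d : ℕ} (f G : EuclideanSpace ℝ (Fin d) → ℂ) (hfc : Continuous f)
    (hf : MemLp f 2 volume) (hG : MemLp G 2 volume) (hG1 : Integrable G volume)
    (hp : ∀ φ : 𝓢(EuclideanSpace ℝ (Fin d), ℂ), ∫ x, φ x * G x = ∫ x, (𝓕 φ) x * f x) :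
    eLpNorm G 2 volume = eLpNorm f 2 volume ∧ ∀ x, f x = 𝓕⁻ G x := by
  constructor
  · have h1 : (𝓕 (hf.toLp f) : Lp ℂ 2 (volume : Measure (EuclideanSpace ℝ (Fin d)))) =ᵐ[volume] G := by
      apply ae_eq_of_schwartz _ _ ((Lp.memLp _).locallyIntegrable (by norm_num))
        (hG.locallyIntegrable (by norm_num))
      intro φ
      rw [hp φ]
      have := congrArg (fun T => T φ) (Lp.fourier_toTemperedDistribution_eq (hf.toLp f))
      simp only [TemperedDistribution.fourier_apply, Lp.toTemperedDistribution_apply,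
        smul_eq_mul] at this
      rw [← this]
      apply integral_congr_ae
      filter_upwards [hf.coeFn_toLp] with x hx
      rw [hx]
    rw [← eLpNorm_congr_ae h1, ← eLpNorm_congr_ae hf.coeFn_toLp, ← Lp.enorm_def, ← Lp.enorm_def,
      ← ofReal_norm, ← ofReal_norm, Lp.norm_fourier_eq]
  · have hc : Continuous (𝓕⁻ G) := by
      have : Continuous (𝓕 G) :=
        VectorFourier.fourierIntegral_continuous Real.continuous_fourierChar
          (by simpa using continuous_inner) hG1
      have h2 : 𝓕⁻ G = fun x => 𝓕 G (-x) := funext fun x => Real.fourierInv_eq_fourier_neg G x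
      rw [h2]
      fun_prop
    have : f =ᵐ[volume] 𝓕⁻ G := by
      apply ae_eq_of_schwartz _ _ hfc.locallyIntegrable hc.locallyIntegrable
      intro φ
      have h3 := hp (𝓕⁻ φ)
      rw [fourier_fourierInv_eq] at h3
      rw [← h3]
      have hG2 : Integrable (fun x => G (-x)) := hG1.comp_neg
      have h4 := integral_fourier_swap _ hG2 φ
      rw [← Real.fourierInv_eq_fourier_comp_neg] at h4
      rw [h4, ← integral_neg_eq_self]
      congr 1
      ext x
      rw [SchwartzMap.fourier_coe, SchwartzMap.fourierInv_coe,
        Real.fourierInv_eq_fourier_neg, neg_neg]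
    exact congrFun ((Continuous.ae_eq_iff_eq volume hfc hc).1 this)

theorem int_exp_1d (N : ℝ) (hN : 0 < N) (k : ℤ) :
    ∫ x in Set.Icc (-(N/2)) (N/2), Complex.exp (2 * Real.pi * Complex.I * ((k : ℂ) * x / N))
      = if k = 0 then (N : ℂ) else 0 := by
  rw [integral_Icc_eq_integral_Ioc, ← intervalIntegral.integral_of_le (by linarith)]
  have hN' : (N : ℂ) ≠ 0 := by exact_mod_cast hN.ne'
  split_ifs with hk
  · subst hk
    simp
  · have hc : (2 * Real.pi * Complex.I * k / N : ℂ) ≠ 0 := by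
      have : (Real.pi : ℂ) ≠ 0 := by exact_mod_cast Real.pi_ne_zero
      have : (k : ℂ) ≠ 0 := by exact_mod_cast hk
      have hI := Complex.I_ne_zero
      simp_all [Real.pi_ne_zero]
    have : ∀ x : ℝ, Complex.exp (2 * Real.pi * Complex.I * ((k : ℂ) * x / N))
        = Complex.exp ((2 * Real.pi * Complex.I * k / N) * x) := by
      intro x; congr 1; ring
    simp_rw [this]
    rw [integral_exp_mul_complex hc]
    rw [_root_.div_eq_zero_iff]; left
    rw [sub_eq_zero, Complex.exp_eq_exp_iff_exists_int]
    refine ⟨k, ?_⟩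
    push_cast
    field_simp
    ring

theorem int_exp_cube {d : ℕ} (N : ℝ) (hN : 0 < N) (k : Fin d → ℤ) :
    ∫ w in Qcube d (N/2), Complex.exp (2 * Real.pi * Complex.I * (∑ j, (k j : ℂ) * w j / N))
      = if k = 0 then ((N ^ d : ℝ) : ℂ) else 0 := by
  rw [← (PiLp.volume_preserving_toLp (Fin d)).setIntegral_preimage_emb
    (MeasurableEquiv.toLp 2 (Fin d → ℝ)).measurableEmbedding]
  have hs : (WithLp.toLp 2 ⁻¹' Qcube d (N/2) : Set (Fin d → ℝ)) =
      Set.univ.pi fun _ => Set.Icc (-(N/2)) (N/2) := by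
    ext w; simp only [Qcube, abs_le, Set.mem_preimage, Set.mem_ofPred_eq, Set.mem_univ_pi, Set.mem_Icc]
  rw [hs, volume_pi, Measure.restrict_pi_pi]
  simp_rw [Finset.mul_sum, Complex.exp_sum]
  rw [integral_fintype_prod_eq_prod (𝕜 := ℂ) (fun j (x : ℝ) =>
    Complex.exp (2 * Real.pi * Complex.I * ((k j : ℂ) * x / N)))]
  simp_rw [int_exp_1d N hN]
  split_ifs with hk
  · simp [hk]
  · obtain ⟨j, hj⟩ := Function.ne_iff.1 hk
    exact Finset.prod_eq_zero (Finset.mem_univ j) (if_neg hj)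

theorem measurableSet_Qcube (d : ℕ) (r : ℝ) : MeasurableSet (Qcube d r) := by
  have : IsClosed (Qcube d r) := by
    simp only [Qcube, Set.ofPred_forall]
    exact isClosed_iInter fun j => isClosed_le (by fun_prop) continuous_const
  exact this.measurableSet

theorem volume_Qcube_lt_top (d : ℕ) (r : ℝ) : volume (Qcube d r) < ⊤ := by
  apply Bornology.IsBounded.measure_lt_top
  rw [isBounded_iff_forall_norm_le]
  refine ⟨∑ _j : Fin d, r, fun x hx => ?_⟩
  have : ‖x‖ ≤ ∑ j, ‖x j‖ := by
    have := norm_sum_le Finset.univ (fun j => x j • EuclideanSpace.single j (1:ℝ))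
    have h2 : ∑ j, x j • EuclideanSpace.single j (1:ℝ) = x := by
      ext i; simp [Pi.single_apply]
    rw [h2] at this
    simpa [norm_smul] using this
  exact this.trans (Finset.sum_le_sum fun j _ => hx j)

theorem bessel {d : ℕ} (N : ℝ) (hN : 0 < N) (h : EuclideanSpace ℝ (Fin d) → ℂ)
    (hh : MemLp h 2 volume) (hs : ∀ᵐ w, w ∉ Qcube d (N/2) → h w = 0) :
    eLpNorm (fun n : Fin d → ℤ => ∫ w, Complex.exp (2 * Real.pi * Complex.I *
      (∑ j, (n j : ℂ) * w j / N)) * h w) 2 Measure.count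
      ≤ ENNReal.ofReal (N ^ ((d : ℝ)/2)) * eLpNorm h 2 volume := by
  set μ := (volume : Measure (EuclideanSpace ℝ (Fin d))).restrict (Qcube d (N/2)) with hμ
  have : IsFiniteMeasure μ := ⟨by simpa [hμ] using volume_Qcube_lt_top d (N/2)⟩
  set c : ℝ := N ^ ((d : ℝ)/2) with hc
  have hc0 : 0 < c := by positivity
  have hc2 : c ^ 2 = N ^ d := by
    rw [hc, ← Real.rpow_natCast, ← Real.rpow_mul hN.le, ← Real.rpow_natCast]
    congr 1; push_cast; ring
  let e : (Fin d → ℤ) → EuclideanSpace ℝ (Fin d) → ℂ := fun n w =>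
    (c : ℂ)⁻¹ * Complex.exp (-(2 * Real.pi * Complex.I * (∑ j, (n j : ℂ) * w j / N)))
  have he : ∀ n, MemLp (e n) 2 μ := by
    intro n
    refine MemLp.of_bound ?_ (c⁻¹) ?_
    · exact Continuous.aestronglyMeasurable (by fun_prop)
    · refine Eventually.of_forall fun w => ?_
      have : -(2 * Real.pi * Complex.I * (∑ j, (n j : ℂ) * w j / N)) =
          ((-(2 * Real.pi * (∑ j, (n j : ℝ) * w j / N)) : ℝ) : ℂ) * Complex.I := by
        push_cast; ring
      simp only [e]
      rw [this, norm_mul, Complex.norm_exp_ofReal_mul_I, norm_inv, Complex.norm_real,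
        Real.norm_of_nonneg hc0.le, mul_one]
  have horth : Orthonormal ℂ (fun n => (he n).toLp (e n)) := by
    rw [orthonormal_iff_ite]
    intro n m
    rw [L2.inner_def]
    have : ∫ a, inner ℂ ((he n).toLp (e n) a) ((he m).toLp (e m) a) ∂μ
       = ∫ w, ((c : ℂ)⁻¹)^2 * Complex.exp (2 * Real.pi * Complex.I *
        (∑ j, (((n - m) j : ℤ) : ℂ) * w j / N)) ∂μ := by
      apply integral_congr_ae
      filter_upwards [(he n).coeFn_toLp, (he m).coeFn_toLp] with w h1 h2
      rw [h1, h2]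
      simp only [e, RCLike.inner_apply, map_mul, ← Complex.exp_conj, map_neg, map_sum, map_div₀,
        map_inv₀, Complex.conj_ofReal, Complex.conj_I, map_ofNat, map_intCast]
      rw [mul_mul_mul_comm, ← Complex.exp_add, sq]
      congr 2
      simp only [Pi.sub_apply, Int.cast_sub, sub_mul, _root_.sub_div, Finset.sum_sub_distrib]
      ring
    rw [this, integral_const_mul, hμ, int_exp_cube N hN]
    simp only [sub_eq_zero]
    split_ifs
    · rw [← hc2]
      have : (c : ℂ) ≠ 0 := by exact_mod_cast hc0.ne'
      push_cast
      field_simp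
    · simp
  have hhμ : MemLp h 2 μ := hh.restrict _
  have hin : ∀ n, ∫ w, Complex.exp (2 * Real.pi * Complex.I *
      (∑ j, (n j : ℂ) * w j / N)) * h w = (c : ℂ) * inner ℂ ((he n).toLp (e n)) (hhμ.toLp h) := by
    intro n
    rw [L2.inner_def, ← integral_const_mul]
    have : ∫ w, Complex.exp (2 * Real.pi * Complex.I *
      (∑ j, (n j : ℂ) * w j / N)) * h w = ∫ w, Complex.exp (2 * Real.pi * Complex.I *
      (∑ j, (n j : ℂ) * w j / N)) * h w ∂μ := by
      rw [hμ, setIntegral_eq_integral_of_ae_compl_eq_zero]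
      filter_upwards [hs] with w hw hw'
      simp [hw hw']
    rw [this]
    apply integral_congr_ae
    filter_upwards [(he n).coeFn_toLp, hhμ.coeFn_toLp] with w h1 h2
    rw [h1, h2]
    have : (c : ℂ) ≠ 0 := by exact_mod_cast hc0.ne'
    simp only [e, RCLike.inner_apply, map_mul, ← Complex.exp_conj, map_neg, map_sum, map_div₀,
        map_inv₀, Complex.conj_ofReal, Complex.conj_I, map_ofNat, map_intCast]
    field_simp
  simp_rw [hin]
  have hb : eLpNorm (fun n => inner ℂ ((he n).toLp (e n)) (hhμ.toLp h)) 2 Measure.count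
      ≤ eLpNorm h 2 volume := by
    have h1 : eLpNorm h 2 μ = ENNReal.ofReal ‖hhμ.toLp h‖ := by
      rw [ofReal_norm, Lp.enorm_def, eLpNorm_congr_ae hhμ.coeFn_toLp]
    refine le_trans ?_ (eLpNorm_mono_measure h (Measure.restrict_le_self : μ ≤ volume))
    rw [h1, eLpNorm_eq_lintegral_rpow_enorm_toReal (by norm_num) (by norm_num), lintegral_count]
    simp only [ENNReal.toReal_ofNat]
    rw [one_div, ENNReal.rpow_inv_le_iff (by norm_num)]
    rw [ENNReal.tsum_eq_iSup_sum]
    refine iSup_le fun s => ?_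
    have := horth.sum_inner_products_le (hhμ.toLp h) (s := s)
    rw [ENNReal.ofReal_rpow_of_nonneg (norm_nonneg _) (by norm_num)]
    simp only [← ofReal_norm]
    simp_rw [ENNReal.ofReal_rpow_of_nonneg (norm_nonneg _) (zero_le_two (α := ℝ)), Real.rpow_two]
    rw [← ENNReal.ofReal_sum_of_nonneg (fun _ _ => by positivity)]
    exact ENNReal.ofReal_le_ofReal this
  have h3 := eLpNorm_const_smul (c : ℂ)
    (fun n => inner ℂ ((he n).toLp (e n)) (hhμ.toLp h)) 2 Measure.count
  have h4 : ‖(c : ℂ)‖ₑ = ENNReal.ofReal c := by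
    rw [← ofReal_norm, Complex.norm_real, Real.norm_of_nonneg hc0.le]
  rw [h4] at h3
  refine le_trans h3.le ?_
  gcongr

def phs {d : ℕ} (N : ℝ) (n : Fin d → ℤ) (w : EuclideanSpace ℝ (Fin d)) : ℂ :=
  Complex.exp (2 * Real.pi * Complex.I * (∑ j, (n j : ℂ) * w j / N))

theorem norm_phs {d : ℕ} (N : ℝ) (n : Fin d → ℤ) (w : EuclideanSpace ℝ (Fin d)) :
    ‖phs N n w‖ = 1 := by
  have : (2 * Real.pi * Complex.I * (∑ j, (n j : ℂ) * w j / N)) =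
      (((2 * Real.pi * (∑ j, (n j : ℝ) * w j / N)) : ℝ) : ℂ) * Complex.I := by
    push_cast; ring
  rw [phs, this, Complex.norm_exp_ofReal_mul_I]

theorem continuous_phs {d : ℕ} (N : ℝ) (n : Fin d → ℤ) :
    Continuous (phs N n) := by unfold phs; fun_prop

def dev {d : ℕ} (δ : Fin d → ℝ) (w : EuclideanSpace ℝ (Fin d)) : ℂ :=
  ∑ j, 2 * Real.pi * Complex.I * (δ j : ℂ) * w j

theorem continuous_dev {d : ℕ} (δ : Fin d → ℝ) : Continuous (dev δ) := by unfold dev; fun_prop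

theorem norm_dev_le {d : ℕ} (δ : Fin d → ℝ) (η N : ℝ) (hη : 0 ≤ η) (hδ : ∀ j, |δ j| ≤ η)
    (w : EuclideanSpace ℝ (Fin d)) (hw : w ∈ Qcube d (N/2)) :
    ‖dev δ w‖ ≤ d * (2 * Real.pi * η * (N/2)) := by
  unfold dev
  calc _ ≤ ∑ j : Fin d, (2 * Real.pi * η * (N/2)) := by
        refine norm_sum_le_of_le _ fun j _ => ?_
        simp only [norm_mul, Complex.norm_real, Complex.norm_I, Complex.norm_ofNat, mul_one,
          Real.norm_eq_abs, abs_of_pos Real.pi_pos]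
        have h1 := hδ j
        have h2 : |w j| ≤ N/2 := hw j
        have := Real.pi_pos
        gcongr
    _ = _ := by simp

theorem int_of_supp_s11 {d : ℕ} (N : ℝ) (h : EuclideanSpace ℝ (Fin d) → ℂ)
    (hh : MemLp h 2 volume) (hs : ∀ᵐ w, w ∉ Qcube d (N/2) → h w = 0) : Integrable h := by
  rw [← integrableOn_iff_integrable_of_support_subset (s := Set.univ) (by simp), integrableOn_univ]
  have : IsFiniteMeasure ((volume : Measure (EuclideanSpace ℝ (Fin d))).restrict (Qcube d (N/2))) :=
    ⟨by simpa using volume_Qcube_lt_top d (N/2)⟩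
  have h1 : IntegrableOn h (Qcube d (N/2)) := (hh.restrict (Qcube d (N/2))).integrable (by norm_num)
  exact h1.integrable_of_ae_notMem_eq_zero hs

theorem int_term {d : ℕ} (N η : ℝ) (hη : 0 ≤ η) (h : EuclideanSpace ℝ (Fin d) → ℂ)
    (hh : MemLp h 2 volume) (hs : ∀ᵐ w, w ∉ Qcube d (N/2) → h w = 0) (δ : Fin d → ℝ)
    (hδ : ∀ j, |δ j| ≤ η) (n : Fin d → ℤ) (k : ℕ) :
    (∀ᵐ w, ‖dev δ w ^ k * (phs N n w * h w)‖ ≤ (d * (2 * Real.pi * η * (N/2))) ^ k * ‖h w‖) ∧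
    Integrable (fun w => dev δ w ^ k * (phs N n w * h w)) := by
  have hb : ∀ᵐ w, ‖dev δ w ^ k * (phs N n w * h w)‖
      ≤ (d * (2 * Real.pi * η * (N/2))) ^ k * ‖h w‖ := by
    filter_upwards [hs] with w hw
    by_cases hq : w ∈ Qcube d (N/2)
    · rw [norm_mul, norm_mul, norm_phs, one_mul, norm_pow]
      gcongr
      exact norm_dev_le δ η N hη hδ w hq
    · simp [hw hq]
  refine ⟨hb, ?_⟩
  have hi := int_of_supp_s11 N h hh hs
  refine Integrable.mono' (hi.norm.const_mul _) ?_ hb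
  exact ((continuous_dev δ).pow k).aestronglyMeasurable.mul
    ((continuous_phs N n).aestronglyMeasurable.mul hi.1)

theorem ind_bound {d : ℕ} (N η : ℝ) (hN : 0 < N) (hη : 0 ≤ η) (δ : (Fin d → ℤ) → Fin d → ℝ)
    (hδ : ∀ n j, |δ n j| ≤ η) (k : ℕ) : ∀ h : EuclideanSpace ℝ (Fin d) → ℂ,
    MemLp h 2 volume → (∀ᵐ w, w ∉ Qcube d (N/2) → h w = 0) →
    eLpNorm (fun n : Fin d → ℤ => ∫ w, dev (δ n) w ^ k * (phs N n w * h w)) 2 Measure.count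
      ≤ ENNReal.ofReal ((d * (2 * Real.pi * η * (N/2))) ^ k * N ^ ((d : ℝ)/2)) *
        eLpNorm h 2 volume := by
  induction k with
  | zero =>
    intro h hh hs
    simpa [phs] using bessel N hN h hh hs
  | succ k ih =>
    intro h hh hs
    have hb : ∀ j : Fin d, ∀ᵐ w : EuclideanSpace ℝ (Fin d), ‖(w j : ℂ) * h w‖ ≤ (N/2) * ‖h w‖ := by
      intro j
      filter_upwards [hs] with w hw
      by_cases hq : w ∈ Qcube d (N/2)
      · rw [norm_mul, Complex.norm_real]
        gcongr
        exact hq j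
      · simp [hw hq]
    have hm : ∀ j : Fin d, MemLp (fun w : EuclideanSpace ℝ (Fin d) => (w j : ℂ) * h w) 2 volume :=
      fun j => MemLp.of_le_mul hh
        ((show Continuous fun w : EuclideanSpace ℝ (Fin d) => (w j : ℂ) by fun_prop).aestronglyMeasurable.mul hh.1) (hb j)
    have hs' : ∀ j : Fin d, ∀ᵐ w : EuclideanSpace ℝ (Fin d), w ∉ Qcube d (N/2) →
        (w j : ℂ) * h w = 0 := by
      intro j
      filter_upwards [hs] with w hw hq
      simp [hw hq]
    have hn : ∀ j : Fin d, eLpNorm (fun w : EuclideanSpace ℝ (Fin d) => (w j : ℂ) * h w) 2 volume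
        ≤ ENNReal.ofReal (N/2) * eLpNorm h 2 volume := fun j =>
      eLpNorm_le_mul_eLpNorm_of_ae_le_mul (hb j) 2
    have key : (fun n : Fin d → ℤ => ∫ w, dev (δ n) w ^ (k+1) * (phs N n w * h w)) =
        ∑ j, fun n : Fin d → ℤ => (2 * Real.pi * Complex.I * (δ n j : ℂ)) *
          ∫ w, dev (δ n) w ^ k * (phs N n w * ((w j : ℂ) * h w)) := by
      ext n
      rw [Finset.sum_apply]
      simp_rw [← integral_const_mul]
      rw [← integral_finsetSum]
      · congr 1
        ext w
        rw [pow_succ]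
        nth_rewrite 2 [dev]
        rw [Finset.mul_sum, Finset.sum_mul]
        refine Finset.sum_congr rfl fun j _ => ?_
        ring
      · intro j _
        exact (int_term N η hη _ (hm j) (hs' j) (δ n) (hδ n) n k).2.const_mul _
    rw [key]
    refine (eLpNorm_sum_le (fun _ _ => Measurable.of_discrete.aestronglyMeasurable)
      (by norm_num)).trans ?_
    set A := d * (2 * Real.pi * η * (N/2)) with hA
    have hpi := Real.pi_pos
    have hA0 : 0 ≤ A := by positivity
    have each : ∀ j : Fin d, eLpNorm (fun n : Fin d → ℤ => (2 * Real.pi * Complex.I * (δ n j : ℂ)) *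
          ∫ w, dev (δ n) w ^ k * (phs N n w * ((w j : ℂ) * h w))) 2 Measure.count ≤
        ENNReal.ofReal ((2 * Real.pi * η * (N/2)) * (A ^ k * N ^ ((d : ℝ)/2)))
          * eLpNorm h 2 volume := by
      intro j
      have h1 := ih _ (hm j) (hs' j)
      have h2 := eLpNorm_le_mul_eLpNorm_of_ae_le_mul (μ := Measure.count) (c := 2 * Real.pi * η)
        (f := (fun n : Fin d → ℤ => (2 * Real.pi * Complex.I * (δ n j : ℂ)) *
          ∫ w, dev (δ n) w ^ k * (phs N n w * ((w j : ℂ) * h w))))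
        (g := fun n : Fin d → ℤ => ∫ w, dev (δ n) w ^ k * (phs N n w * ((w j : ℂ) * h w)))
        (Eventually.of_forall fun n => by
          rw [norm_mul]
          gcongr
          simp only [norm_mul, Complex.norm_real, Complex.norm_I, Complex.norm_ofNat, mul_one,
            Real.norm_eq_abs, abs_of_pos Real.pi_pos]
          gcongr
          exact hδ n j) 2
      refine h2.trans ?_
      calc _ ≤ ENNReal.ofReal (2 * Real.pi * η) * (ENNReal.ofReal (A ^ k * N ^ ((d : ℝ)/2)) *
            (ENNReal.ofReal (N/2) * eLpNorm h 2 volume)) := by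
              gcongr
              exact h1.trans (by gcongr; exact hn j)
        _ = _ := by
          rw [← mul_assoc, ← mul_assoc, ← ENNReal.ofReal_mul (by positivity),
            ← ENNReal.ofReal_mul (by positivity)]
          congr 2; ring
    refine (Finset.sum_le_sum fun j _ => each j).trans ?_
    simp only [Finset.sum_const, Finset.card_univ, Fintype.card_fin, nsmul_eq_mul]
    rw [← mul_assoc, ← ENNReal.ofReal_natCast, ← ENNReal.ofReal_mul (by positivity)]
    apply le_of_eq
    congr 2
    rw [pow_succ, hA]; ring

theorem series_bound {d : ℕ} (N η : ℝ) (hN : 0 < N) (hη : 0 ≤ η) (δ : (Fin d → ℤ) → Fin d → ℝ)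
    (hδ : ∀ n j, |δ n j| ≤ η) (h : EuclideanSpace ℝ (Fin d) → ℂ)
    (hh : MemLp h 2 volume) (hs : ∀ᵐ w, w ∉ Qcube d (N/2) → h w = 0) :
    eLpNorm (fun n : Fin d → ℤ => ∫ w, (Complex.exp (dev (δ n) w) - 1) * (phs N n w * h w))
      2 Measure.count
      ≤ ENNReal.ofReal ((Real.exp (d * (2 * Real.pi * η * (N/2))) - 1) * N ^ ((d : ℝ)/2)) *
        eLpNorm h 2 volume := by
  set A := d * (2 * Real.pi * η * (N/2)) with hA
  have hpi := Real.pi_pos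
  have hA0 : 0 ≤ A := by positivity
  let S : ℕ → (Fin d → ℤ) → ℂ := fun K => ∑ k ∈ Finset.range K, (((k+1).factorial : ℂ)⁻¹) •
    fun n : Fin d → ℤ => ∫ w, dev (δ n) w ^ (k+1) * (phs N n w * h w)
  have hAsum : HasSum (fun k : ℕ => A ^ (k+1) / (k+1).factorial) (Real.exp A - 1) := by
    have := NormedSpace.expSeries_div_hasSum_exp A
    rw [← Real.exp_eq_exp_ℝ, ← hasSum_nat_add_iff' 1] at this
    simpa using this
  have hlim : ∀ n, Tendsto (fun K => S K n) atTop
      (𝓝 (∫ w, (Complex.exp (dev (δ n) w) - 1) * (phs N n w * h w))) := by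
    intro n
    have h1 := hasSum_integral_of_summable_integral_norm (μ := volume)
      (F := fun (k : ℕ) w => ((k+1).factorial : ℂ)⁻¹ * (dev (δ n) w ^ (k+1) * (phs N n w * h w)))
      (fun k => (int_term N η hη h hh hs (δ n) (hδ n) n (k+1)).2.const_mul _)
      (by
        refine Summable.of_nonneg_of_le (fun k => integral_nonneg fun w => norm_nonneg _) ?_
          (hAsum.summable.mul_right (∫ w, ‖h w‖))
        intro k
        rw [← integral_const_mul]
        apply integral_mono_ae
        · exact ((int_term N η hη h hh hs (δ n) (hδ n) n (k+1)).2.const_mul _).norm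
        · exact (int_of_supp_s11 N h hh hs).norm.const_mul _
        · filter_upwards [(int_term N η hη h hh hs (δ n) (hδ n) n (k+1)).1] with w hw
          rw [norm_mul, norm_inv, Complex.norm_natCast, div_eq_inv_mul, mul_assoc]
          gcongr)
    have h2 : ∀ w, ∑' k : ℕ, ((k+1).factorial : ℂ)⁻¹ * (dev (δ n) w ^ (k+1) * (phs N n w * h w))
        = (Complex.exp (dev (δ n) w) - 1) * (phs N n w * h w) := by
      intro w
      have := NormedSpace.expSeries_div_hasSum_exp (dev (δ n) w)
      rw [← Complex.exp_eq_exp_ℂ, ← hasSum_nat_add_iff' 1] at this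
      have := (this.mul_right (phs N n w * h w)).tsum_eq
      simp only [Finset.range_one, Finset.sum_singleton, pow_zero, Nat.factorial_zero,
        Nat.cast_one, div_one] at this
      rw [← this]
      congr 1; ext k; ring
    simp_rw [h2, integral_const_mul] at h1
    refine h1.tendsto_sum_nat.congr fun K => ?_
    simp [S]
  refine (Lp.eLpNorm_lim_le_liminf_eLpNorm (f := S)
    (fun _ => Measurable.of_discrete.aestronglyMeasurable) _
    (Eventually.of_forall hlim)).trans ?_
  refine liminf_le_of_le (by isBoundedDefault) ?_
  intro b hb
  obtain ⟨K, hK⟩ := hb.exists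
  refine hK.trans ?_
  refine (eLpNorm_sum_le (fun _ _ => Measurable.of_discrete.aestronglyMeasurable)
      (by norm_num)).trans ?_
  calc _ ≤ ∑ k ∈ Finset.range K, ENNReal.ofReal (A ^ (k+1) / (k+1).factorial * N ^ ((d : ℝ)/2)) *
        eLpNorm h 2 volume := by
        refine Finset.sum_le_sum fun k _ => ?_
        rw [eLpNorm_const_smul]
        have e1 : ‖((k+1).factorial : ℂ)⁻¹‖ₑ = ENNReal.ofReal (((k+1).factorial : ℝ)⁻¹) := by
          rw [← ofReal_norm, norm_inv, Complex.norm_natCast]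
        rw [e1]
        refine (mul_le_mul_right (ind_bound N η hN hη δ hδ (k+1) h hh hs) _).trans ?_
        rw [← mul_assoc, ← ENNReal.ofReal_mul (by positivity)]
        apply le_of_eq
        congr 2
        rw [hA]; ring
    _ = ENNReal.ofReal ((∑ k ∈ Finset.range K, A ^ (k+1) / (k+1).factorial) * N ^ ((d : ℝ)/2)) *
        eLpNorm h 2 volume := by
        rw [← Finset.sum_mul, ← ENNReal.ofReal_sum_of_nonneg (fun _ _ => by positivity),
          ← Finset.sum_mul]
    _ ≤ _ := by
        gcongr
        exact sum_le_hasSum _ (fun _ _ => by positivity) hAsum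

theorem scale_norm (d : ℕ) (h : EuclideanSpace ℝ (Fin d) → ℂ) :
    eLpNorm (fun x => (((2 * Real.pi) ^ ((d : ℝ)/2) : ℝ) : ℂ) * h ((2 * Real.pi) • x)) 2 volume
      = eLpNorm h 2 volume := by
  have hpi := Real.pi_pos
  have hr : (2 * Real.pi) ≠ 0 := by positivity
  have h1 := eLpNorm_const_smul (((2 * Real.pi) ^ ((d : ℝ)/2) : ℝ) : ℂ)
    (fun x : EuclideanSpace ℝ (Fin d) => h ((2 * Real.pi) • x)) 2 volume
  have hemb : MeasurableEmbedding (fun x : EuclideanSpace ℝ (Fin d) => (2 * Real.pi) • x) :=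
    (Homeomorph.smulOfNeZero (2 * Real.pi) hr).measurableEmbedding
  have h2 := hemb.eLpNorm_map_measure (μ := volume) (g := h) (p := 2)
  rw [Measure.map_addHaar_smul _ hr, eLpNorm_smul_measure_of_ne_top (by norm_num)] at h2
  refine h1.trans ?_
  change _ * eLpNorm (h ∘ fun x : EuclideanSpace ℝ (Fin d) => (2 * Real.pi) • x) 2 volume = _
  rw [← h2, smul_eq_mul, ← mul_assoc, ← ofReal_norm, Complex.norm_real,
    Real.norm_of_nonneg (by positivity)]
  have : ENNReal.ofReal ((2 * Real.pi) ^ ((d : ℝ)/2)) *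
      ENNReal.ofReal |((2 * Real.pi) ^ Module.finrank ℝ (EuclideanSpace ℝ (Fin d)))⁻¹|
        ^ (1 / (2 : ℝ≥0∞)).toReal = 1 := by
    rw [ENNReal.ofReal_rpow_of_nonneg (abs_nonneg _) (by simp), ← ENNReal.ofReal_mul (by positivity)]
    rw [abs_of_pos (by positivity), finrank_euclideanSpace_fin, Real.inv_rpow (by positivity),
      ← Real.rpow_natCast, ← Real.rpow_mul (by positivity)]
    have e : (d : ℝ) * (1 / (2 : ℝ≥0∞)).toReal = (d : ℝ) / 2 := by
      simp [div_eq_mul_inv]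
    rw [e, mul_inv_cancel₀ (by positivity), ENNReal.ofReal_one]
  rw [this, one_mul]

open FourierTransform in
theorem scale_trunc {d : ℕ} (f : EuclideanSpace ℝ (Fin d) → ℂ) (R : ℝ)
    (ξ : EuclideanSpace ℝ (Fin d)) :
    (((2 * Real.pi) ^ ((d : ℝ)/2) : ℝ) : ℂ) * truncFT d f R ((2 * Real.pi) • ξ)
      = 𝓕 ((closedBall (0 : EuclideanSpace ℝ (Fin d)) R).indicator f) ξ := by
  have hpi := Real.pi_pos
  rw [truncFT, ← mul_assoc, ← Complex.ofReal_mul, ← Real.rpow_add (by positivity)]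
  rw [show (d : ℝ)/2 + -(d : ℝ)/2 = 0 by ring, Real.rpow_zero, Complex.ofReal_one, one_mul,
    Real.fourier_eq', ← integral_indicator measurableSet_closedBall]
  congr 1
  ext x
  by_cases hx : x ∈ closedBall (0 : EuclideanSpace ℝ (Fin d)) R
  · rw [Set.indicator_of_mem hx, Set.indicator_of_mem hx, smul_eq_mul, inner_smul_right]
    congr 2
    push_cast
    ring
  · simp [hx]

open FourierTransform in
/-- Let `N > 0`, `ε ∈ (0,1)` and `(λ_n)` with `|λ_n - n/N| ≤ ε/N`. Then every `f ∈ 𝒫_N`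
(continuous representative, Fourier transform supported in `Q_{πN}(0)`) satisfies
`(Σ_{n ∈ ℤ^d} |f(λ_n) - f(n/N)|²)^{1/2} ≤ ε π d e^{πd} N^{d/2} ‖f‖`. -/
theorem statement11 (d : ℕ) (hd : 0 < d) (N ε : ℝ) (hN : 0 < N) (hε : ε ∈ Set.Ioo (0 : ℝ) 1)
    (lam : (Fin d → ℤ) → EuclideanSpace ℝ (Fin d))
    (hlam : ∀ n, ‖lam n - latticePt d N n‖ ≤ ε / N)
    (f fhat : EuclideanSpace ℝ (Fin d) → ℂ)
    (hf : Continuous f) (hfm : MemLp f 2 volume) (hFT : IsL2Fourier d f fhat)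
    (hsupp : ∀ᵐ ξ ∂(volume : Measure (EuclideanSpace ℝ (Fin d))),
      ξ ∉ Qcube d (Real.pi * N) → fhat ξ = 0) :
    (∑' n : Fin d → ℤ, (‖f (lam n) - f (latticePt d N n)‖₊ : ℝ≥0∞) ^ 2) ^ ((1 : ℝ) / 2)
      ≤ ENNReal.ofReal
          (ε * Real.pi * d * Real.exp (Real.pi * d) * N ^ ((d : ℝ) / 2) * l2norm d f) := by
  obtain ⟨hε0, hε1⟩ := hε
  obtain ⟨hg, hgl⟩ := hFT
  have hpi := Real.pi_pos
  set c : ℝ := (2 * Real.pi) ^ ((d : ℝ)/2) with hc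
  set G : EuclideanSpace ℝ (Fin d) → ℂ := fun x => (c : ℂ) * fhat ((2 * Real.pi) • x) with hG
  have hq : Measure.QuasiMeasurePreserving
      (fun x : EuclideanSpace ℝ (Fin d) => (2 * Real.pi) • x) volume volume := by
    refine ⟨by fun_prop, ?_⟩
    rw [Measure.map_addHaar_smul _ (by positivity)]
    exact Measure.smul_absolutelyContinuous
  have hGm : MemLp G 2 volume := by
    refine ⟨(hg.1.comp_quasiMeasurePreserving hq).const_mul _, ?_⟩
    rw [hG, scale_norm]
    exact hg.2
  have hGs : ∀ᵐ w, w ∉ Qcube d (N/2) → G w = 0 := by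
    filter_upwards [hq.ae hsupp] with w hw hw'
    have : fhat ((2 * Real.pi) • w) = 0 := by
      apply hw
      intro h
      apply hw'
      intro j
      have h1 := h j
      simp only [PiLp.smul_apply, smul_eq_mul, abs_mul, abs_of_pos hpi, Nat.abs_ofNat] at h1
      have h2 : Real.pi * (2 * |w j|) ≤ Real.pi * N := by linarith
      have := le_of_mul_le_mul_left h2 hpi
      linarith
    simp [hG, this]
  have hGl : Tendsto (fun R : ℝ => eLpNorm (fun ξ => G ξ -
      𝓕 ((closedBall (0 : EuclideanSpace ℝ (Fin d)) R).indicator f) ξ) 2 volume)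
      atTop (𝓝 0) := by
    refine hgl.congr fun R => ?_
    rw [← scale_norm d (fun ξ => fhat ξ - truncFT d f R ξ)]
    congr 1
    ext ξ
    rw [← scale_trunc, mul_sub]
  obtain ⟨hnorm, hinv⟩ := norm_eq_and_inv f G hf hfm hGm (int_of_supp_s11 N G hGm hGs)
    (pairing f G hfm hGm hGl)
  set δ : (Fin d → ℤ) → Fin d → ℝ := fun n j => (lam n - latticePt d N n) j with hδ
  have hδb : ∀ n j, |δ n j| ≤ ε / N := fun n j =>
    (PiLp.norm_apply_le (lam n - latticePt d N n) j).trans (hlam n)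
  have hGi := int_of_supp_s11 N G hGm hGs
  have hdiff : ∀ n, f (lam n) - f (latticePt d N n) =
      ∫ w, (Complex.exp (dev (δ n) w) - 1) * (phs N n w * G w) := by
    intro n
    have hii : ∀ x : EuclideanSpace ℝ (Fin d), Integrable (fun w : EuclideanSpace ℝ (Fin d) =>
        Complex.exp ((↑(2 * Real.pi * inner ℝ w x) * Complex.I)) • G w) := by
      intro x
      refine (hGi.norm).mono' ?_ (Eventually.of_forall fun w => ?_)
      · exact (show Continuous fun w : EuclideanSpace ℝ (Fin d) =>
          Complex.exp ((↑(2 * Real.pi * inner ℝ w x) * Complex.I)) by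
            fun_prop).aestronglyMeasurable.smul hGi.1
      · rw [norm_smul, Complex.norm_exp_ofReal_mul_I, one_mul]
    rw [hinv, hinv, Real.fourierInv_eq', Real.fourierInv_eq', ← integral_sub (hii _) (hii _)]
    congr 1
    ext w
    have e1 : Complex.exp ((↑(2 * Real.pi * inner ℝ w (latticePt d N n)) * Complex.I))
        = phs N n w := by
      rw [phs]
      congr 1
      simp only [latticePt, PiLp.inner_apply, RCLike.inner_apply, conj_trivial]
      push_cast
      rw [Finset.mul_sum, Finset.sum_mul, Finset.mul_sum]
      refine Finset.sum_congr rfl fun j _ => ?_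
      ring
    have e2 : Complex.exp ((↑(2 * Real.pi * inner ℝ w (lam n)) * Complex.I))
        = Complex.exp (dev (δ n) w) * phs N n w := by
      rw [← e1, ← Complex.exp_add]
      congr 1
      have : lam n = (lam n - latticePt d N n) + latticePt d N n := by abel
      rw [this, inner_add_right]
      have : dev (δ n) w = (↑(2 * Real.pi * inner ℝ w (lam n - latticePt d N n)) * Complex.I) := by
        simp only [dev, hδ, PiLp.inner_apply, RCLike.inner_apply, conj_trivial]
        push_cast
        rw [Finset.mul_sum, Finset.sum_mul]
        refine Finset.sum_congr rfl fun j _ => ?_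
        ring
      rw [this]
      push_cast
      ring
    rw [e1, e2]
    simp only [smul_eq_mul]
    ring
  have hmain := series_bound N (ε / N) hN (by positivity) δ hδb G hGm hGs
  have hL : (∑' n : Fin d → ℤ, (‖f (lam n) - f (latticePt d N n)‖₊ : ℝ≥0∞) ^ 2) ^ ((1 : ℝ) / 2)
      = eLpNorm (fun n => f (lam n) - f (latticePt d N n)) 2 Measure.count := by
    rw [eLpNorm_eq_lintegral_rpow_enorm_toReal (by norm_num) (by norm_num), lintegral_count]
    simp [enorm_eq_nnnorm]
  rw [hL]
  simp_rw [hdiff]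
  refine hmain.trans ?_
  have hx : (d : ℝ) * (2 * Real.pi * (ε / N) * (N / 2)) = ε * Real.pi * d := by
    field_simp
  rw [hx, hnorm, l2norm, ENNReal.ofReal_mul (p := _ * _) (by positivity),
    ENNReal.ofReal_toReal hfm.2.ne]
  gcongr
  have h1 : Real.exp (ε * Real.pi * d) - 1 ≤ ε * Real.pi * d * Real.exp (ε * Real.pi * d) := by
    have h2 := Real.add_one_le_exp (-(ε * Real.pi * d))
    have h3 : Real.exp (-(ε * Real.pi * d)) * Real.exp (ε * Real.pi * d) = 1 := by
      rw [← Real.exp_add]; simp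
    nlinarith [Real.exp_pos (ε * Real.pi * d)]
  refine h1.trans ?_
  gcongr
  nlinarith
end
end

section
/- There is a constant C = C(d) > 0 with the following property: for every u₀ ∈ L²(ℝ^d), every T > 0, N > 0, ε ∈ (0,1), and every family (λ_n)_{n∈ℤ^d} ⊂ ℝ^d satisfying |λ_n − n/N| ≤ ε/N for all n ∈ ℤ^d, the heat solution u with initial datum u₀ satisfies (Σ_{n∈ℤ^d} |u(T,λ_n) − u(T,n/N)|²)^{1/2} ≤ C ε N^{d/2} (1 + (TN²)^{-d/4 − 1/2} e^{-TN²}) ‖u₀‖. -/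
open MeasureTheory Filter Topology Metric ENNReal NNReal

noncomputable section

lemma aux_1d {r s : ℝ} (hr : 0 ≤ r) (hs : 0 ≤ s) :
    |Real.exp (-r^2) - Real.exp (-s^2)| ≤
      2 * |r - s| * (Real.exp (-r^2/2) + Real.exp (-s^2/2)) := by
  have key : ∀ r s : ℝ, 0 ≤ r → r ≤ s →
      |Real.exp (-r^2) - Real.exp (-s^2)| ≤ 2 * Real.exp (-r^2/2) * |r - s| := by
    intro r s hr hrs
    have h := Convex.norm_image_sub_le_of_norm_hasDerivWithin_le
      (f := fun x : ℝ => Real.exp (-x^2)) (f' := fun x => Real.exp (-x^2) * (-(2 * x)))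
      (s := Set.Icc r s) (C := 2 * Real.exp (-r^2/2)) (x := s) (y := r) ?_ ?_
      (convex_Icc r s) ⟨hrs, le_rfl⟩ ⟨le_rfl, hrs⟩
    · simpa [Real.norm_eq_abs] using h
    · intro x hx
      have h1 : HasDerivAt (fun x : ℝ => -x^2) (-(2 * x)) x := by
        have h0 := (hasDerivAt_pow 2 x).fun_neg
        simp only [Nat.cast_ofNat, Nat.add_one_sub_one, pow_one] at h0
        exact h0
      exact h1.exp.hasDerivWithinAt
    · intro x hx
      have hx0 : 0 ≤ x := hr.trans hx.1
      rw [Real.norm_eq_abs, abs_mul, abs_neg, abs_of_nonneg (by positivity : 0 ≤ 2 * x),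
        abs_of_pos (Real.exp_pos _)]
      have e1 : Real.exp (-x^2) = Real.exp (-x^2/2) * Real.exp (-(x^2/2)) := by
        rw [← Real.exp_add]; congr 1; ring
      have e2 : x * Real.exp (-(x^2/2)) ≤ 1 := by
        rw [Real.exp_neg, ← div_eq_mul_inv, div_le_one (Real.exp_pos _)]
        nlinarith [Real.add_one_le_exp (x^2/2), sq_nonneg (x-1)]
      have e3 : Real.exp (-x^2/2) ≤ Real.exp (-r^2/2) := by
        apply Real.exp_le_exp.2
        nlinarith [hx.1]
      rw [e1]
      calc _ = 2 * Real.exp (-x^2/2) * (x * Real.exp (-(x^2/2))) := by ring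
        _ ≤ 2 * Real.exp (-x^2/2) * 1 := by gcongr
        _ ≤ _ := by linarith
  have p1 := Real.exp_pos (-r^2/2)
  have p2 := Real.exp_pos (-s^2/2)
  have p3 := abs_nonneg (r - s)
  rcases le_total r s with h | h
  · have := key r s hr h
    nlinarith [mul_nonneg p3 p2.le]
  · have := key s r hs h
    rw [abs_sub_comm, abs_sub_comm s r] at this
    nlinarith [mul_nonneg p3 p1.le]

lemma aux_gauss {V : Type*} [NormedAddCommGroup V] {T h : ℝ} (hT : 0 < T) {a b : V}
    (hab : ‖a - b‖ ≤ h) :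
    |Real.exp (-‖a‖^2/(4*T)) - Real.exp (-‖b‖^2/(4*T))| ≤
      (h / √T) * (Real.exp (-(1/(8*T)) * ‖a‖^2) + Real.exp (-(1/(8*T)) * ‖b‖^2)) := by
  have hs : 0 < √T := Real.sqrt_pos.2 hT
  have hsq : √T ^ 2 = T := Real.sq_sqrt hT.le
  have := aux_1d (r := ‖a‖/(2*√T)) (s := ‖b‖/(2*√T)) (by positivity) (by positivity)
  have e : ∀ x : V, -(‖x‖/(2*√T))^2 = -‖x‖^2/(4*T) := by
    intro x; rw [div_pow, mul_pow, hsq]; ring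
  have e' : ∀ x : V, -‖x‖^2/(4*T)/2 = -(1/(8*T)) * ‖x‖^2 := by
    intro x; field_simp; ring
  rw [e, e, e', e'] at this
  refine this.trans ?_
  gcongr
  rw [div_sub_div_same, abs_div, abs_of_pos (by positivity : 0 < 2*√T)]
  have := (abs_norm_sub_norm_le a b).trans hab
  rw [mul_div_assoc', mul_div_mul_left _ _ two_ne_zero]
  gcongr

lemma aux_cs {X : Type*} [MeasurableSpace X] {μ : Measure X} {k f : X → ℝ≥0∞}
    (hk : AEMeasurable k μ) (hf : AEMeasurable f μ) :
    (∫⁻ x, k x * f x ∂μ)^2 ≤ (∫⁻ x, k x ∂μ) * ∫⁻ x, k x * f x ^ 2 ∂μ := by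
  have hpq : (2:ℝ).HolderConjugate 2 := Real.HolderConjugate.two_two
  have h := ENNReal.lintegral_mul_le_Lp_mul_Lq μ hpq
    (hk.pow_const (1/2 : ℝ)) ((hk.pow_const (1/2 : ℝ)).mul hf)
  have s : ∀ z : ℝ≥0∞, (z ^ (1/2 : ℝ)) ^ (2:ℝ) = z := by
    intro z; rw [← ENNReal.rpow_mul]; norm_num
  have s' : ∀ z : ℝ≥0∞, (z ^ (1/2 : ℝ)) ^ 2 = z := by
    intro z; rw [← ENNReal.rpow_natCast, ← ENNReal.rpow_mul]; norm_num
  have e0 : ∀ x, ((fun x => k x ^ (1/2:ℝ)) * ((fun x => k x ^ (1/2:ℝ)) * f)) x = k x * f x := by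
    intro x
    simp only [Pi.mul_apply]
    rw [← mul_assoc, ← sq, s']
  have e1 : ∀ x, (((fun x => k x ^ (1/2:ℝ)) * f) x) ^ (2:ℝ) = k x * f x ^ 2 := by
    intro x
    simp only [Pi.mul_apply]
    rw [ENNReal.mul_rpow_of_nonneg _ _ (by norm_num), s]
    norm_num
  simp only [e0, e1, s] at h
  calc _ ≤ _ := pow_le_pow_left' h 2
    _ = _ := by rw [mul_pow, s', s']

lemma aux_schur {X ι : Type*} [Countable ι] [MeasurableSpace X] {μ : Measure X}
    {k : ι → X → ℝ≥0∞} {f : X → ℝ≥0∞}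
    (hk : ∀ i, AEMeasurable (k i) μ) (hf : AEMeasurable f μ) {A B : ℝ≥0∞}
    (hA : ∀ i, ∫⁻ x, k i x ∂μ ≤ A) (hB : ∀ x, ∑' i, k i x ≤ B) :
    ∑' i, (∫⁻ x, k i x * f x ∂μ)^2 ≤ A * (B * ∫⁻ x, f x ^ 2 ∂μ) := by
  calc _ ≤ ∑' i, A * ∫⁻ x, k i x * f x ^ 2 ∂μ :=
        ENNReal.tsum_le_tsum fun i => (aux_cs (hk i) hf).trans (by gcongr; exact hA i)
    _ = A * ∫⁻ x, (∑' i, k i x) * f x ^ 2 ∂μ := by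
        rw [ENNReal.tsum_mul_left, ← lintegral_tsum (f := fun i x => k i x * f x ^ 2) (fun i => (hk i).mul (hf.pow_const 2))]
        simp only [ENNReal.tsum_mul_right]
    _ ≤ A * ∫⁻ x, B * f x ^ 2 ∂μ := by gcongr with x; exact hB x
    _ = _ := by rw [lintegral_const_mul'' _ (hf.pow_const 2)]

lemma aux_int (d : ℕ) {b : ℝ} (hb : 0 < b) (z : EuclideanSpace ℝ (Fin d)) :
    ∫⁻ y, ENNReal.ofReal (Real.exp (-b * ‖z - y‖^2)) =
      ENNReal.ofReal ((Real.pi / b) ^ ((d:ℝ)/2)) := by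
  rw [lintegral_sub_left_eq_self (μ := volume) (fun y => ENNReal.ofReal (Real.exp (-b * ‖y‖^2))) z]
  have h := GaussianFourier.integral_rexp_neg_mul_sq_norm (V := EuclideanSpace ℝ (Fin d)) hb
  rw [finrank_euclideanSpace, Fintype.card_fin] at h
  have hpos : 0 < (Real.pi / b) ^ ((d:ℝ)/2) := by positivity
  rw [← h, ofReal_integral_eq_lintegral_ofReal]
  · exact Integrable.of_integral_ne_zero (by rw [h]; exact hpos.ne')
  · exact Eventually.of_forall fun x => (Real.exp_pos _).le

lemma aux_sum (d : ℕ) : ∃ D : ℝ, 0 < D ∧ ∀ τ : ℝ, 0 < τ →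
    ∀ (m : (Fin d → ℤ) → EuclideanSpace ℝ (Fin d)) (z : EuclideanSpace ℝ (Fin d)),
    (∀ n, ‖m n - latticePt d 1 n‖ ≤ 1) →
    ∑' n, ENNReal.ofReal (Real.exp (-(1/(8*τ)) * ‖m n - z‖^2)) ≤
      ENNReal.ofReal (D * (max 1 τ) ^ ((d:ℝ)/2)) := by
  set v : ℝ≥0∞ := volume (ball (0 : EuclideanSpace ℝ (Fin d)) (1/2)) with hv
  have hv0 : v ≠ 0 := (measure_ball_pos _ _ (by norm_num)).ne'
  have hvt : v ≠ ∞ := measure_ball_lt_top.ne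
  have hvr : 0 < v.toReal := ENNReal.toReal_pos hv0 hvt
  refine ⟨v.toReal⁻¹ * (Real.exp 1 * (16 * Real.pi) ^ ((d:ℝ)/2)), by positivity, ?_⟩
  intro τ hτ m z hm
  set σ := max 1 τ
  have hσ1 : 1 ≤ σ := le_max_left _ _
  have hστ : τ ≤ σ := le_max_right _ _
  have hσ : 0 < σ := by linarith
  have hpt : ∀ n, ∀ w ∈ ball (latticePt d 1 n) (1/2),
      ENNReal.ofReal (Real.exp (-(1/(8*τ)) * ‖m n - z‖^2)) ≤
      ENNReal.ofReal (Real.exp 1 * Real.exp (-(1/(16*σ)) * ‖z - w‖^2)) := by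
    intro n w hw
    apply ENNReal.ofReal_le_ofReal
    rw [← Real.exp_add]
    apply Real.exp_le_exp.2
    have h1 : ‖z - w‖ ≤ ‖m n - z‖ + 3/2 := by
      have a1 := hm n
      have a2 : ‖latticePt d 1 n - w‖ ≤ 1/2 := by
        rw [← dist_eq_norm, dist_comm]; exact (mem_ball.1 hw).le
      have a3 : z - w = -(m n - z) + (m n - latticePt d 1 n) + (latticePt d 1 n - w) := by abel
      rw [a3]
      refine (norm_add₃_le).trans ?_
      rw [norm_neg]; linarith
    have h2 : ‖z - w‖^2 ≤ 2 * ‖m n - z‖^2 + 9/2 := by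
      have := pow_le_pow_left₀ (norm_nonneg _) h1 2
      nlinarith [sq_nonneg (‖m n - z‖ - 3/2)]
    have h3 : (1/(8*σ)) * ‖m n - z‖^2 ≤ (1/(8*τ)) * ‖m n - z‖^2 := by gcongr
    have h4 : (1/(16*σ)) * ‖z - w‖^2 ≤ (1/(16*σ)) * (2 * ‖m n - z‖^2 + 9/2) := by gcongr
    have h5 : (1/(16*σ)) * (2 * ‖m n - z‖^2 + 9/2) = (1/(8*σ)) * ‖m n - z‖^2 + (9/32) / σ := by
      field_simp; ring
    have h6 : (9/32) / σ ≤ 1 := by rw [div_le_one hσ]; linarith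
    linarith
  have hdisj : Pairwise (Function.onFun Disjoint
      fun n : Fin d → ℤ => ball (latticePt d 1 n) (1/2)) := by
    intro n n' hne
    rw [Function.onFun, Set.disjoint_left]
    intro w hw hw'
    apply hne
    funext j
    have h1 : dist (latticePt d 1 n) (latticePt d 1 n') < 1 := by
      have := dist_triangle_left (latticePt d 1 n) (latticePt d 1 n') w
      rw [mem_ball] at hw hw'
      linarith
    rw [dist_eq_norm] at h1
    have h2 := (PiLp.norm_apply_le (latticePt d 1 n - latticePt d 1 n') j).trans_lt h1
    simp only [latticePt, PiLp.sub_apply, div_one, Real.norm_eq_abs] at h2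
    have h3 : |n j - n' j| < 1 := by exact_mod_cast h2
    have := Int.abs_lt_one_iff.1 h3
    omega
  have hvol : ∀ n, volume (ball (latticePt d 1 n) (1/2)) = v := fun n =>
    Measure.addHaar_ball_center _ _ _
  have main : v * ∑' n, ENNReal.ofReal (Real.exp (-(1/(8*τ)) * ‖m n - z‖^2)) ≤
      ENNReal.ofReal (Real.exp 1 * (16 * Real.pi) ^ ((d:ℝ)/2) * σ ^ ((d:ℝ)/2)) := by
    rw [← ENNReal.tsum_mul_left]
    calc _ ≤ ∑' n, ∫⁻ w in ball (latticePt d 1 n) (1/2),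
          ENNReal.ofReal (Real.exp 1 * Real.exp (-(1/(16*σ)) * ‖z - w‖^2)) := by
          refine ENNReal.tsum_le_tsum fun n => ?_
          rw [← hvol n, mul_comm, ← setLIntegral_const]
          exact setLIntegral_mono' measurableSet_ball (hpt n)
      _ = ∫⁻ w in ⋃ n, ball (latticePt d 1 n) (1/2),
          ENNReal.ofReal (Real.exp 1 * Real.exp (-(1/(16*σ)) * ‖z - w‖^2)) := by
          rw [lintegral_iUnion (fun _ => measurableSet_ball) hdisj]
      _ ≤ ∫⁻ w, ENNReal.ofReal (Real.exp 1 * Real.exp (-(1/(16*σ)) * ‖z - w‖^2)) :=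
          setLIntegral_le_lintegral _ _
      _ = _ := by
          simp_rw [ENNReal.ofReal_mul (Real.exp_pos 1).le]
          rw [lintegral_const_mul' _ _ ENNReal.ofReal_ne_top, aux_int d (by positivity) z,
            mul_assoc, ENNReal.ofReal_mul (Real.exp_pos 1).le, ← Real.mul_rpow (by positivity) hσ.le]
          congr 4
          field_simp
  rw [mul_assoc, ENNReal.ofReal_mul (by positivity), ENNReal.ofReal_inv_of_pos hvr,
    ENNReal.ofReal_toReal hvt, ← ENNReal.div_eq_inv_mul,
    ENNReal.le_div_iff_mul_le (Or.inl hv0) (Or.inl hvt), mul_comm]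
  exact main

lemma aux_memLp (d : ℕ) {T : ℝ} (hT : 0 < T) (x : EuclideanSpace ℝ (Fin d)) :
    MemLp (fun y => Real.exp (-‖x - y‖ ^ 2 / (4 * T))) 2 volume := by
  have hc : Continuous (fun y : EuclideanSpace ℝ (Fin d) => Real.exp (-‖x - y‖ ^ 2 / (4 * T))) := by
    fun_prop
  rw [memLp_two_iff_integrable_sq hc.aestronglyMeasurable]
  refine ⟨(hc.pow 2).aestronglyMeasurable, ?_⟩
  rw [hasFiniteIntegral_iff_ofReal (Eventually.of_forall fun y => by positivity)]
  have := aux_int d (b := 1/(2*T)) (by positivity) x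
  have e : ∀ y, Real.exp (-‖x - y‖ ^ 2 / (4 * T)) ^ 2 = Real.exp (-(1/(2*T)) * ‖x - y‖^2) := by
    intro y
    rw [← Real.exp_nat_mul]; congr 1; push_cast; field_simp; ring
  simp_rw [e]
  rw [this]
  exact ENNReal.ofReal_lt_top

lemma aux_diff (d : ℕ) {u₀ : EuclideanSpace ℝ (Fin d) → ℝ} (hu : MemLp u₀ 2 volume)
    {T h : ℝ} (hT : 0 < T) {x p : EuclideanSpace ℝ (Fin d)} (hxp : ‖x - p‖ ≤ h) :
    ‖heatSol d u₀ T x - heatSol d u₀ T p‖ₑ ≤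
      ∫⁻ y, ENNReal.ofReal ((4 * Real.pi * T) ^ (-(d : ℝ) / 2) * (h / √T)) *
        (ENNReal.ofReal (Real.exp (-(1/(8*T)) * ‖x - y‖^2)) +
         ENNReal.ofReal (Real.exp (-(1/(8*T)) * ‖p - y‖^2))) * ‖u₀ y‖ₑ := by
  have hh : 0 ≤ h := (norm_nonneg _).trans hxp
  have i1 : Integrable (fun y => Real.exp (-‖x - y‖ ^ 2 / (4 * T)) * u₀ y) :=
    (aux_memLp d hT x).integrable_mul hu
  have i2 : Integrable (fun y => Real.exp (-‖p - y‖ ^ 2 / (4 * T)) * u₀ y) :=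
    (aux_memLp d hT p).integrable_mul hu
  unfold heatSol
  rw [← mul_sub, ← integral_sub i1 i2, ← integral_const_mul]
  refine (enorm_integral_le_lintegral_enorm _).trans ?_
  refine lintegral_mono fun y => ?_
  rw [← sub_mul, ← mul_assoc, enorm_mul]
  gcongr
  rw [← ENNReal.ofReal_add (Real.exp_pos _).le (Real.exp_pos _).le,
    ← ENNReal.ofReal_mul (by positivity), ← ofReal_norm]
  apply ENNReal.ofReal_le_ofReal
  rw [norm_mul, Real.norm_eq_abs, Real.norm_eq_abs, abs_of_nonneg (by positivity),
    mul_assoc ((4 * Real.pi * T) ^ (-(d : ℝ) / 2))]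
  refine mul_le_mul_of_nonneg_left ?_ (by positivity)
  exact aux_gauss hT (by simpa using hxp)

lemma aux_final (d : ℕ) {τ : ℝ} (hτ : 0 < τ) :
    τ ^ (-(d:ℝ)/4 - 1/2) * (max 1 τ) ^ ((d:ℝ)/4) ≤
      Real.exp 1 * (1 + τ ^ (-(d : ℝ) / 4 - 1 / 2) * Real.exp (-τ)) := by
  have hp : 0 < τ ^ (-(d:ℝ)/4 - 1/2) := by positivity
  have he := Real.exp_pos (-τ)
  rcases le_total τ 1 with h | h
  · rw [max_eq_left h, Real.one_rpow, mul_one, mul_add, mul_left_comm, ← Real.exp_add]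
    have : 1 ≤ Real.exp (1 + -τ) := Real.one_le_exp (by linarith)
    nlinarith [Real.exp_pos 1]
  · rw [max_eq_right h, ← Real.rpow_add hτ]
    have h1 : τ ^ (-(d:ℝ)/4 - 1/2 + (d:ℝ)/4) ≤ 1 :=
      Real.rpow_le_one_of_one_le_of_nonpos h (by linarith)
    have h2 : 1 ≤ Real.exp 1 := Real.one_le_exp (by norm_num)
    nlinarith [mul_pos hp he, mul_pos (Real.exp_pos 1) (mul_pos hp he)]

lemma aux_alg (d : ℕ) {T N ε D : ℝ} (hT : 0 < T) (hN : 0 < N) (hD : 0 < D) :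
    ((4 * Real.pi * T) ^ (-(d : ℝ) / 2) * (ε / N / √T) * (2 * (Real.pi / (1/(8*T))) ^ ((d:ℝ)/2))) *
    ((4 * Real.pi * T) ^ (-(d : ℝ) / 2) * (ε / N / √T) * (2 * (D * (max 1 (T*N^2)) ^ ((d:ℝ)/2))))
    = (√(4 * D * 2 ^ ((d:ℝ)/2) * (4 * Real.pi) ^ (-(d:ℝ)/2)) * ε * N ^ ((d:ℝ)/2) *
      ((T*N^2) ^ (-(d:ℝ)/4 - 1/2) * (max 1 (T*N^2)) ^ ((d:ℝ)/4))) ^ 2 := by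
  have hπ := Real.pi_pos
  set σ := max 1 (T*N^2)
  have hσ : 0 < σ := lt_max_of_lt_left one_pos
  have e1 : √(4 * D * 2 ^ ((d:ℝ)/2) * (4 * Real.pi) ^ (-(d:ℝ)/2)) ^ 2 =
      4 * D * 2 ^ ((d:ℝ)/2) * (4 * Real.pi) ^ (-(d:ℝ)/2) := Real.sq_sqrt (by positivity)
  have e2 : (N ^ ((d:ℝ)/2)) ^ 2 = N ^ (d:ℝ) := by
    rw [← Real.rpow_mul_natCast hN.le]; congr 1; push_cast; ring
  have e3 : (σ ^ ((d:ℝ)/4)) ^ 2 = σ ^ ((d:ℝ)/2) := by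
    rw [← Real.rpow_mul_natCast hσ.le]; congr 1; push_cast; ring
  have e4 : ((T*N^2) ^ (-(d:ℝ)/4 - 1/2)) ^ 2 = T ^ (-(d:ℝ)/2) * T⁻¹ * (N ^ (-(d:ℝ)) * (N^2)⁻¹) := by
    rw [← Real.rpow_mul_natCast (by positivity), Real.mul_rpow hT.le (by positivity),
      ← Real.rpow_natCast N 2, ← Real.rpow_mul hN.le, ← Real.rpow_neg_one T,
      ← Real.rpow_neg hN.le, ← Real.rpow_add hT, ← Real.rpow_add hN]
    congr 2 <;> push_cast <;> ring
  have e5 : (Real.pi / (1/(8*T))) ^ ((d:ℝ)/2) = 2 ^ ((d:ℝ)/2) * (4 * Real.pi * T) ^ ((d:ℝ)/2) := by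
    rw [← Real.mul_rpow (by positivity) (by positivity)]; congr 1; field_simp; ring
  have e6 : (4 * Real.pi * T) ^ (-(d:ℝ)/2) * (4 * Real.pi * T) ^ ((d:ℝ)/2) = 1 := by
    rw [← Real.rpow_add (by positivity)]
    have : -(d:ℝ)/2 + (d:ℝ)/2 = 0 := by ring
    rw [this, Real.rpow_zero]
  have e7 : (4 * Real.pi * T) ^ (-(d:ℝ)/2) = (4 * Real.pi) ^ (-(d:ℝ)/2) * T ^ (-(d:ℝ)/2) :=
    Real.mul_rpow (by positivity) hT.le
  have e8 : N ^ (d:ℝ) * N ^ (-(d:ℝ)) = 1 := by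
    rw [← Real.rpow_add hN, add_neg_cancel, Real.rpow_zero]
  have e9 : (ε / N / √T)^2 = ε^2 * (N^2)⁻¹ * T⁻¹ := by
    rw [div_pow, div_pow, Real.sq_sqrt hT.le]; rfl
  calc _ = ((4 * Real.pi * T) ^ (-(d:ℝ)/2) * (4 * Real.pi * T) ^ ((d:ℝ)/2)) *
        (4 * D * 2 ^ ((d:ℝ)/2) * (4 * Real.pi * T) ^ (-(d:ℝ)/2)) * (ε / N / √T)^2 *
        σ ^ ((d:ℝ)/2) := by rw [e5]; ring
    _ = (4 * D * 2 ^ ((d:ℝ)/2) * ((4 * Real.pi) ^ (-(d:ℝ)/2) * T ^ (-(d:ℝ)/2))) *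
        (ε^2 * (N^2)⁻¹ * T⁻¹) * σ ^ ((d:ℝ)/2) * (N ^ (d:ℝ) * N ^ (-(d:ℝ))) := by
          rw [e6, e7, e8, e9]; ring
    _ = _ := by
          rw [mul_pow, mul_pow, mul_pow, mul_pow, e1, e2, e3, e4]; ring

/-- There is `C = C(d) > 0` such that for every `u₀ ∈ L²(ℝ^d)`, `T > 0`, `N > 0`,
`ε ∈ (0,1)` and every family `(λ_n)` with `|λ_n - n/N| ≤ ε/N`,
`(Σ_{n ∈ ℤ^d} |u(T,λ_n) - u(T,n/N)|²)^{1/2}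
  ≤ C ε N^{d/2} (1 + (TN²)^{-d/4 - 1/2} e^{-TN²}) ‖u₀‖`. -/
theorem statement12 (d : ℕ) (hd : 0 < d) :
    ∃ C : ℝ, 0 < C ∧
      ∀ u₀ : EuclideanSpace ℝ (Fin d) → ℝ, MemLp u₀ 2 volume →
      ∀ T N ε : ℝ, 0 < T → 0 < N → ε ∈ Set.Ioo (0 : ℝ) 1 →
      ∀ lam : (Fin d → ℤ) → EuclideanSpace ℝ (Fin d),
        (∀ n, ‖lam n - latticePt d N n‖ ≤ ε / N) →
        (∑' n : Fin d → ℤ,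
            (‖heatSol d u₀ T (lam n) - heatSol d u₀ T (latticePt d N n)‖₊ : ℝ≥0∞) ^ 2)
              ^ ((1 : ℝ) / 2)
          ≤ ENNReal.ofReal
              (C * ε * N ^ ((d : ℝ) / 2) *
                (1 + (T * N ^ 2) ^ (-(d : ℝ) / 4 - 1 / 2) * Real.exp (-(T * N ^ 2))) *
                l2norm d u₀) := by
  obtain ⟨D, hD, hsum⟩ := aux_sum d
  have hπ := Real.pi_pos
  set K := √(4 * D * 2 ^ ((d:ℝ)/2) * (4 * Real.pi) ^ (-(d:ℝ)/2)) with hK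
  have hKpos : 0 < K := Real.sqrt_pos.2 (by positivity)
  refine ⟨K * Real.exp 1, by positivity, ?_⟩
  intro u₀ hu T N ε hT hN hε lam hlam
  have hε0 : 0 < ε := hε.1
  set c : ℝ := (4 * Real.pi * T) ^ (-(d : ℝ) / 2) * (ε / N / √T) with hc
  have hc0 : 0 ≤ c := by positivity
  set τ := T * N^2 with hτdef
  have hτ : 0 < τ := by positivity
  set k : (Fin d → ℤ) → EuclideanSpace ℝ (Fin d) → ℝ≥0∞ := fun n y =>
    ENNReal.ofReal c *
        (ENNReal.ofReal (Real.exp (-(1/(8*T)) * ‖lam n - y‖^2)) +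
         ENNReal.ofReal (Real.exp (-(1/(8*T)) * ‖latticePt d N n - y‖^2))) with hk
  have hkm : ∀ n, AEMeasurable (k n) volume := by
    intro n
    have h1 : ∀ x : EuclideanSpace ℝ (Fin d), Measurable
        (fun y => ENNReal.ofReal (Real.exp (-(1/(8*T)) * ‖x - y‖^2))) := by
      intro x
      exact ENNReal.measurable_ofReal.comp (Continuous.measurable (by fun_prop))
    exact (((h1 _).add (h1 _)).const_mul _).aemeasurable
  have hA : ∀ n, ∫⁻ y, k n y ≤ ENNReal.ofReal (c * (2 * (Real.pi / (1/(8*T))) ^ ((d:ℝ)/2))) := by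
    intro n
    rw [hk]
    simp only
    rw [lintegral_const_mul' _ _ ENNReal.ofReal_ne_top, lintegral_add_left', aux_int d (by positivity),
      aux_int d (by positivity), ← ENNReal.ofReal_add (by positivity) (by positivity),
      ← ENNReal.ofReal_mul hc0, two_mul]
    exact (ENNReal.measurable_ofReal.comp (Continuous.measurable (by fun_prop))).aemeasurable
  have hscale : ∀ q : (Fin d → ℤ) → EuclideanSpace ℝ (Fin d),
      (∀ n, ‖q n - latticePt d N n‖ ≤ 1 / N) → ∀ y,
      ∑' n, ENNReal.ofReal (Real.exp (-(1/(8*T)) * ‖q n - y‖^2)) ≤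
        ENNReal.ofReal (D * (max 1 τ) ^ ((d:ℝ)/2)) := by
    intro q hq y
    have hl : ∀ n, latticePt d 1 n = N • latticePt d N n := by
      intro n; ext j; simp [latticePt]; field_simp
    have := hsum τ hτ (fun n => N • q n) (N • y) (by
      intro n
      rw [hl, ← smul_sub, norm_smul, Real.norm_of_nonneg hN.le]
      have := mul_le_mul_of_nonneg_left (hq n) hN.le
      rwa [mul_one_div_cancel hN.ne'] at this)
    refine le_trans (le_of_eq ?_) this
    congr 1; funext n
    rw [← smul_sub, norm_smul, Real.norm_of_nonneg hN.le]
    congr 2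
    rw [hτdef]; field_simp
  have hB : ∀ y, ∑' n, k n y ≤ ENNReal.ofReal (c * (2 * (D * (max 1 τ) ^ ((d:ℝ)/2)))) := by
    intro y
    rw [hk]
    simp only
    rw [ENNReal.tsum_mul_left, ENNReal.tsum_add, ENNReal.ofReal_mul hc0, two_mul,
      ENNReal.ofReal_add (by positivity) (by positivity)]
    gcongr
    · refine hscale lam (fun n => (hlam n).trans ?_) y
      gcongr
      exact hε.2.le
    · refine hscale (latticePt d N) (fun n => ?_) y
      simp only [sub_self, norm_zero]; positivity
  have hS := aux_schur hkm hu.1.enorm hA hB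
  have hl2 : ∫⁻ y, ‖u₀ y‖ₑ ^ 2 = ENNReal.ofReal (l2norm d u₀) ^ 2 := by
    rw [l2norm, ENNReal.ofReal_toReal hu.2.ne]
    have := eLpNorm_nnreal_pow_eq_lintegral (f := u₀) (μ := volume) (p := 2) two_ne_zero
    simpa using this.symm
  set R := K * Real.exp 1 * ε * N ^ ((d : ℝ) / 2) *
                (1 + τ ^ (-(d : ℝ) / 4 - 1 / 2) * Real.exp (-τ)) with hR
  have hR0 : 0 ≤ R := by positivity
  have hfin : ∑' n : Fin d → ℤ,
            (‖heatSol d u₀ T (lam n) - heatSol d u₀ T (latticePt d N n)‖₊ : ℝ≥0∞) ^ 2 ≤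
      ENNReal.ofReal (R * l2norm d u₀) ^ 2 := by
    calc _ ≤ ∑' n, (∫⁻ y, k n y * ‖u₀ y‖ₑ) ^ 2 :=
          ENNReal.tsum_le_tsum fun n => pow_le_pow_left' (aux_diff d hu hT (hlam n)) 2
      _ ≤ _ := hS
      _ = ENNReal.ofReal ((K * ε * N ^ ((d:ℝ)/2) *
            (τ ^ (-(d:ℝ)/4 - 1/2) * (max 1 τ) ^ ((d:ℝ)/4))) ^ 2) *
            ENNReal.ofReal (l2norm d u₀) ^ 2 := by
          rw [hl2, ← mul_assoc, ← ENNReal.ofReal_mul (by positivity), hc, hτdef,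
            aux_alg d hT hN hD]
      _ ≤ ENNReal.ofReal (R^2) * ENNReal.ofReal (l2norm d u₀) ^ 2 := by
          gcongr
          have := aux_final d hτ
          calc _ ≤ K * ε * N ^ ((d:ℝ)/2) * (Real.exp 1 * (1 + τ ^ (-(d : ℝ) / 4 - 1 / 2) * Real.exp (-τ))) := by
                gcongr
            _ = R := by rw [hR]; ring
      _ = _ := by
          rw [ENNReal.ofReal_pow hR0, ← mul_pow, ENNReal.ofReal_mul hR0]
  calc _ ≤ (ENNReal.ofReal (R * l2norm d u₀) ^ 2) ^ ((1:ℝ)/2) := by gcongr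
    _ = _ := by rw [← ENNReal.rpow_natCast, ← ENNReal.rpow_mul]; norm_num
end
end
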